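/- arXiv:0811.0359 — 3 statements merged into one kernel-verified Lean document; each statement's English description precedes it below -/
import Mathlib

section
/- For every disjunctive logic program P, X ∈ {E,A}, and every autoepistemic interpretation ⟨w,T⟩: if w ⊨ˣ_T τ^∨_HP(P) then w ⊨ˣ_T τ^∨_EB(P); and if P is safe, then w ⊨ˣ_T τ^∨_EB(P) implies w ⊨ˣ_T τ^∨_EH(P). -/
set_option autoImplicit false

/-! # First-order autoepistemic logic (FO-AEL): syntax -/

structure Sig : Type 1 where
  Func : Type
  Pred : Type
  arF : Func → ℕ
  arP : Pred → ℕ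

inductive Term (S : Sig) : Type
  | var : ℕ → Term S
  | func : (f : S.Func) → (Fin (S.arF f) → Term S) → Term S

inductive Formula (S : Sig) : Type
  | atom : (p : S.Pred) → (Fin (S.arP p) → Term S) → Formula S
  | eq : Term S → Term S → Formula S
  | not : Formula S → Formula S
  | and : Formula S → Formula S → Formula S
  | ex : ℕ → Formula S → Formula S
  | box : Formula S → Formula S

namespace Term

variable {S : Sig}

/-- A term is ground if it contains no variables; ground terms are the *names*. -/
def isGround : Term S → Prop
  | var _ => False
  | func _ ts => ∀ i, (ts i).isGround

def hasVar (x : ℕ) : Term S → Prop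
  | var y => y = x
  | func _ ts => ∃ i, (ts i).hasVar x

/-- Application of a partial (name) substitution to a term. -/
def subst (β : ℕ → Option (Term S)) : Term S → Term S
  | var x => (β x).getD (var x)
  | func f ts => func f (fun i => (ts i).subst β)

/-- The function symbols occurring in a term. -/
def funcs : Term S → Set S.Func
  | var _ => ∅
  | func f ts => insert f (⋃ i, (ts i).funcs)

/-- `t` is a name (ground term) over the set `F` of function symbols. -/
def isNameOf (F : Set S.Func) : Term S → Prop
  | var _ => False
  | func f ts => f ∈ F ∧ ∀ i, (ts i).isNameOf F

end Term

namespace Formula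

variable {S : Sig}

/-- A formula is objective if it is 𝖫-free. -/
def isObjective : Formula S → Prop
  | atom _ _ => True
  | eq _ _ => True
  | not φ => φ.isObjective
  | and φ ψ => φ.isObjective ∧ ψ.isObjective
  | ex _ φ => φ.isObjective
  | box _ => False

def isGround : Formula S → Prop
  | atom _ ts => ∀ i, (ts i).isGround
  | eq t₁ t₂ => t₁.isGround ∧ t₂.isGround
  | not φ => φ.isGround
  | and φ ψ => φ.isGround ∧ ψ.isGround
  | ex _ _ => False
  | box φ => φ.isGround

def isAtomic : Formula S → Prop
  | atom _ _ => True
  | eq _ _ => True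
  | not _ => False
  | and _ _ => False
  | ex _ _ => False
  | box _ => False

/-- The modal operator 𝖫 occurs only applied to (objective) atomic formulas. -/
def boxAtomic : Formula S → Prop
  | atom _ _ => True
  | eq _ _ => True
  | not φ => φ.boxAtomic
  | and φ ψ => φ.boxAtomic ∧ ψ.boxAtomic
  | ex _ φ => φ.boxAtomic
  | box φ => φ.isAtomic

/-- Propositional formulas: built from 0-ary predicates only. -/
def isPropositional : Formula S → Prop
  | atom p _ => S.arP p = 0
  | eq _ _ => False
  | not φ => φ.isPropositional
  | and φ ψ => φ.isPropositional ∧ ψ.isPropositional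
  | ex _ _ => False
  | box _ => False

def freeIn (x : ℕ) : Formula S → Prop
  | atom _ ts => ∃ i, (ts i).hasVar x
  | eq t₁ t₂ => t₁.hasVar x ∨ t₂.hasVar x
  | not φ => φ.freeIn x
  | and φ ψ => φ.freeIn x ∨ ψ.freeIn x
  | ex y φ => x ≠ y ∧ φ.freeIn x
  | box φ => φ.freeIn x

/-- A formula is closed (a sentence) if it has no free variables. -/
def closed (φ : Formula S) : Prop := ∀ x, ¬ φ.freeIn x

/-- Capture-avoiding application of a partial name substitution (values are ground). -/
def subst (β : ℕ → Option (Term S)) : Formula S → Formula S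
  | atom p ts => atom p (fun i => (ts i).subst β)
  | eq t₁ t₂ => eq (t₁.subst β) (t₂.subst β)
  | not φ => not (φ.subst β)
  | and φ ψ => and (φ.subst β) (ψ.subst β)
  | ex y φ => ex y (φ.subst (fun z => if z = y then none else β z))
  | box φ => box (φ.subst β)

def funcs : Formula S → Set S.Func
  | atom _ ts => ⋃ i, (ts i).funcs
  | eq t₁ t₂ => t₁.funcs ∪ t₂.funcs
  | not φ => φ.funcs
  | and φ ψ => φ.funcs ∪ ψ.funcs
  | ex _ φ => φ.funcs
  | box φ => φ.funcs

def preds : Formula S → Set S.Pred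
  | atom p _ => {p}
  | eq _ _ => ∅
  | not φ => φ.preds
  | and φ ψ => φ.preds ∪ ψ.preds
  | ex _ φ => φ.preds
  | box φ => φ.preds

/-- `φ ∨ ψ` as an abbreviation: `¬(¬φ ∧ ¬ψ)`. -/
def or (φ ψ : Formula S) : Formula S := not (and (not φ) (not ψ))

/-- `φ ⊃ ψ` as an abbreviation: `¬(φ ∧ ¬ψ)`. -/
def imp (φ ψ : Formula S) : Formula S := not (and φ (not ψ))

/-- `∀x.φ` as an abbreviation: `¬∃x.¬φ`. -/
def all (x : ℕ) (φ : Formula S) : Formula S := not (ex x (not φ))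

end Formula

/-! ## Semantics -/

structure Interp (S : Sig) where
  U : Type
  nonempty : Nonempty U
  interpF : (f : S.Func) → (Fin (S.arF f) → U) → U
  interpP : (p : S.Pred) → (Fin (S.arP p) → U) → Prop

noncomputable def Interp.dflt {S : Sig} (w : Interp S) : w.U := Classical.choice w.nonempty

def Term.eval {S : Sig} (w : Interp S) (B : ℕ → w.U) : Term S → w.U
  | Term.var x => B x
  | Term.func f ts => w.interpF f (fun i => (ts i).eval w B)

/-- Evaluation of a ground term (the assignment is irrelevant). -/
noncomputable def Term.evalG {S : Sig} (w : Interp S) (t : Term S) : w.U :=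
  t.eval w (fun _ => w.dflt)

/-- An individual is named if some name (ground term) denotes it. -/
def IsNamed {S : Sig} (w : Interp S) (k : w.U) : Prop :=
  ∃ t : Term S, t.isGround ∧ Term.evalG w t = k

/-- A name substitution `β` is associated with the variable assignment `B`:
its domain is exactly the set of variables whose `B`-value is named, and
it assigns to each such variable a name denoting its `B`-value. -/
def Assoc {S : Sig} (w : Interp S) (B : ℕ → w.U) (β : ℕ → Option (Term S)) : Prop :=
  ∀ x : ℕ,
    (IsNamed w (B x) → (β x).isSome) ∧
    (∀ t : Term S, β x = some t → t.isGround ∧ Term.evalG w t = B x)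

/-- The two semantics: any-name (E) and all-name (A). -/
inductive Sem : Type
  | any
  | all

/-- Satisfaction of a formula in an autoepistemic interpretation `⟨w,Γ⟩`
under a variable assignment, for the any-name (E) resp. all-name (A) semantics. -/
def Sat {S : Sig} (X : Sem) (w : Interp S) (Γ : Set (Formula S)) :
    Formula S → (ℕ → w.U) → Prop
  | Formula.atom p ts, B => w.interpP p (fun i => (ts i).eval w B)
  | Formula.eq t₁ t₂, B => t₁.eval w B = t₂.eval w B
  | Formula.not φ, B => ¬ Sat X w Γ φ B
  | Formula.and φ ψ, B => Sat X w Γ φ B ∧ Sat X w Γ ψ B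
  | Formula.ex x φ, B => ∃ u : w.U, Sat X w Γ φ (Function.update B x u)
  | Formula.box φ, B =>
      match X with
      | Sem.any => ∃ β, Assoc w B β ∧ (φ.subst β).closed ∧ φ.subst β ∈ Γ
      | Sem.all => ∀ β, Assoc w B β → (φ.subst β).closed ∧ φ.subst β ∈ Γ

def ModelsF {S : Sig} (X : Sem) (w : Interp S) (Γ : Set (Formula S)) (φ : Formula S) : Prop :=
  ∀ B : ℕ → w.U, Sat X w Γ φ B

def ModelsT {S : Sig} (X : Sem) (w : Interp S) (Γ Φ : Set (Formula S)) : Prop :=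
  ∀ φ ∈ Φ, ModelsF X w Γ φ

/-- `Φ ⊨ˣ_Γ φ`. -/
def Entails {S : Sig} (X : Sem) (Φ Γ : Set (Formula S)) (φ : Formula S) : Prop :=
  ∀ w : Interp S, ModelsT X w Γ Φ → ModelsF X w Γ φ

/-- The standard names assumption: all names are interpreted distinctly
and every individual is named. -/
def SNA {S : Sig} (w : Interp S) : Prop :=
  (∀ t₁ t₂ : Term S, t₁.isGround → t₂.isGround → Term.evalG w t₁ = Term.evalG w t₂ → t₁ = t₂) ∧
  (∀ k : w.U, IsNamed w k)

/-- Entailment restricted to interpretations satisfying the standard names assumption. -/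
def EntailsSN {S : Sig} (X : Sem) (Φ Γ : Set (Formula S)) (φ : Formula S) : Prop :=
  ∀ w : Interp S, SNA w → ModelsT X w Γ Φ → ModelsF X w Γ φ

/-- `T` is a stableˣ expansion of `Φ`. -/
def StableExp {S : Sig} (X : Sem) (Φ T : Set (Formula S)) : Prop :=
  T = {φ | Entails X Φ T φ}

def objOf {S : Sig} (T : Set (Formula S)) : Set (Formula S) :=
  {φ ∈ T | φ.isObjective}

def ogOf {S : Sig} (T : Set (Formula S)) : Set (Formula S) :=
  {φ ∈ T | φ.isObjective ∧ φ.isGround}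

def ogaOf {S : Sig} (T : Set (Formula S)) : Set (Formula S) :=
  {φ ∈ T | φ.isObjective ∧ φ.isGround ∧ φ.isAtomic}

def Consistent {S : Sig} (T : Set (Formula S)) : Prop := T ≠ Set.univ

/-- `Φ₁ ≡ˣ Φ₂`: same stableˣ expansions. -/
def ExpEquiv {S : Sig} (X : Sem) (Φ₁ Φ₂ : Set (Formula S)) : Prop :=
  ∀ T, StableExp X Φ₁ T ↔ StableExp X Φ₂ T

/-- `Φ₁ ≡ˣ_γ Φ₂` for a selector `sel` (e.g. `ogaOf`): the stableˣ expansions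
correspond with respect to `sel`. -/
def ExpEquivSel {S : Sig} (X : Sem) (sel : Set (Formula S) → Set (Formula S))
    (Φ₁ Φ₂ : Set (Formula S)) : Prop :=
  (∀ T, StableExp X Φ₁ T → ∃ T', StableExp X Φ₂ T' ∧ sel T = sel T') ∧
  (∀ T', StableExp X Φ₂ T' → ∃ T, StableExp X Φ₁ T ∧ sel T = sel T')

/-- Autoepistemicˣ consequences of `Φ`. -/
def Cn {S : Sig} (X : Sem) (Φ : Set (Formula S)) : Set (Formula S) :=
  {φ | ∀ T, StableExp X Φ T → φ ∈ T}

def CnO {S : Sig} (X : Sem) (Φ : Set (Formula S)) : Set (Formula S) :=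
  {φ ∈ Cn X Φ | φ.isObjective}

def CnOg {S : Sig} (X : Sem) (Φ : Set (Formula S)) : Set (Formula S) :=
  {φ ∈ Cn X Φ | φ.isObjective ∧ φ.isGround}

/-! ## Logic programs -/

structure PAtom (S : Sig) where
  p : S.Pred
  args : Fin (S.arP p) → Term S

namespace PAtom

variable {S : Sig}

def toFormula (a : PAtom S) : Formula S := Formula.atom a.p a.args

def isGround (a : PAtom S) : Prop := ∀ i, (a.args i).isGround

def hasVar (x : ℕ) (a : PAtom S) : Prop := ∃ i, (a.args i).hasVar x

def substA (σ : ℕ → Term S) (a : PAtom S) : PAtom S :=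
  ⟨a.p, fun i => (a.args i).subst (fun x => some (σ x))⟩

def funcs (a : PAtom S) : Set S.Func := ⋃ i, (a.args i).funcs

end PAtom

/-- A (disjunctive) rule `h₁ | … | h_l ← b₁,…,b_m, not c₁,…,not c_n`,
together with a list of the variables occurring in it. -/
structure Rule (S : Sig) where
  head : List (PAtom S)
  pos : List (PAtom S)
  neg : List (PAtom S)
  vars : List ℕ

namespace Rule

variable {S : Sig}

def atoms (r : Rule S) : List (PAtom S) := r.head ++ r.pos ++ r.neg

def hasVar (x : ℕ) (r : Rule S) : Prop := ∃ a ∈ r.atoms, PAtom.hasVar x a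

/-- Well-formedness: at least one head atom, and `vars` lists all variables of the rule. -/
def wf (r : Rule S) : Prop := r.head ≠ [] ∧ ∀ x, r.hasVar x → x ∈ r.vars

def isNormal (r : Rule S) : Prop := r.head.length = 1

def isGround (r : Rule S) : Prop := (∀ a ∈ r.atoms, a.isGround) ∧ r.vars = []

def isSafe (r : Rule S) : Prop := ∀ x, r.hasVar x → ∃ a ∈ r.pos, PAtom.hasVar x a

def isPositive (r : Rule S) : Prop := r.neg = []

def applySubst (σ : ℕ → Term S) (r : Rule S) : Rule S :=
  ⟨r.head.map (PAtom.substA σ), r.pos.map (PAtom.substA σ), r.neg.map (PAtom.substA σ), []⟩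

end Rule

abbrev Program (S : Sig) := Set (Rule S)

def progWf {S : Sig} (P : Program S) : Prop := ∀ r ∈ P, r.wf
def progNormal {S : Sig} (P : Program S) : Prop := ∀ r ∈ P, r.isNormal
def progGround {S : Sig} (P : Program S) : Prop := ∀ r ∈ P, r.isGround
def progSafe {S : Sig} (P : Program S) : Prop := ∀ r ∈ P, r.isSafe
def progPositive {S : Sig} (P : Program S) : Prop := ∀ r ∈ P, r.isPositive

/-- The function symbols occurring in `P` (part of the signature `Σ_P`). -/
def progFuncs {S : Sig} (P : Program S) : Set S.Func :=
  {f | ∃ r ∈ P, ∃ a ∈ r.atoms, f ∈ a.funcs}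

/-- The predicate symbols occurring in `P` (part of the signature `Σ_P`). -/
def progPreds {S : Sig} (P : Program S) : Set S.Pred :=
  {q | ∃ r ∈ P, ∃ a ∈ r.atoms, a.p = q}

/-- The ambient signature is exactly the signature `Σ_P` of `P`. -/
def fullSig {S : Sig} (P : Program S) : Prop :=
  (∀ f : S.Func, f ∈ progFuncs P) ∧ (∀ q : S.Pred, q ∈ progPreds P)

/-- Standing assumption: `Σ_P` contains a 0-ary function symbol whenever it
has a predicate symbol of arity greater than 0. -/
def goodSig {S : Sig} (P : Program S) : Prop :=
  (∃ q ∈ progPreds P, 0 < S.arP q) → ∃ f ∈ progFuncs P, S.arF f = 0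

/-! ## Embeddings of logic programs into FO-AEL -/

def andAll {S : Sig} : Formula S → List (Formula S) → Formula S
  | φ, [] => φ
  | φ, ψ :: rest => andAll (Formula.and φ ψ) rest

def orAll {S : Sig} : Formula S → List (Formula S) → Formula S
  | φ, [] => φ
  | φ, ψ :: rest => orAll (Formula.or φ ψ) rest

/-- `impOf ants c` is `⋀ ants ⊃ c` (just `c` if there are no antecedents). -/
def impOf {S : Sig} : List (Formula S) → Formula S → Formula S
  | [], c => c
  | a :: rest, c => Formula.imp (andAll a rest) c

/-- Disjunction of a nonempty list (junk value on the empty list,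
which is excluded by rule well-formedness). -/
def disjOf {S : Sig} : List (Formula S) → Formula S
  | [] => Formula.eq (Term.var 0) (Term.var 0)
  | h :: rest => orAll h rest

/-- Universal uclosure over the listed variables. -/
def uclosure {S : Sig} (vs : List ℕ) (φ : Formula S) : Formula S :=
  vs.foldr Formula.all φ

def bodyHP {S : Sig} (r : Rule S) : List (Formula S) :=
  r.pos.map PAtom.toFormula ++ r.neg.map (fun c => Formula.not (Formula.box c.toFormula))

def bodyE {S : Sig} (r : Rule S) : List (Formula S) :=
  r.pos.map (fun b => Formula.and b.toFormula (Formula.box b.toFormula)) ++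
    r.neg.map (fun c => Formula.not (Formula.box c.toFormula))

/-- `τ_HP(r)` resp. `τ^∨_HP(r)`. -/
def embHP {S : Sig} (r : Rule S) : Formula S :=
  uclosure r.vars (impOf (bodyHP r) (disjOf (r.head.map PAtom.toFormula)))

/-- `τ_EB(r)` resp. `τ^∨_EB(r)`. -/
def embEB {S : Sig} (r : Rule S) : Formula S :=
  uclosure r.vars (impOf (bodyE r) (disjOf (r.head.map PAtom.toFormula)))

/-- `τ_EH(r)` resp. `τ^∨_EH(r)`. -/
def embEH {S : Sig} (r : Rule S) : Formula S :=
  uclosure r.vars (impOf (bodyE r)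
    (disjOf (r.head.map (fun h => Formula.and h.toFormula (Formula.box h.toFormula)))))

/-- The unique-names axioms `¬𝖫(t₁=t₂) ⊃ t₁≠t₂` for distinct names of `Σ_P`. -/
def UNAax {S : Sig} (P : Program S) : Set (Formula S) :=
  {φ | ∃ t₁ t₂ : Term S, t₁.isNameOf (progFuncs P) ∧ t₂.isNameOf (progFuncs P) ∧ t₁ ≠ t₂ ∧
        φ = Formula.imp (Formula.not (Formula.box (Formula.eq t₁ t₂)))
              (Formula.not (Formula.eq t₁ t₂))}

/-- The positive introspection axioms `α ⊃ 𝖫α` for objective ground atoms of `Σ_P`. -/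
def PIAax {S : Sig} (P : Program S) : Set (Formula S) :=
  {φ | ∃ a : PAtom S, a.p ∈ progPreds P ∧ (∀ i, (a.args i).isNameOf (progFuncs P)) ∧
        φ = Formula.imp a.toFormula (Formula.box a.toFormula)}

def ruleEmb {S : Sig} (emb : Rule S → Formula S) (P : Program S) : Set (Formula S) :=
  {φ | ∃ r ∈ P, φ = emb r}

def tauHP {S : Sig} (P : Program S) : Set (Formula S) := ruleEmb embHP P ∪ UNAax P
def tauEB {S : Sig} (P : Program S) : Set (Formula S) := ruleEmb embEB P ∪ UNAax P
def tauEH {S : Sig} (P : Program S) : Set (Formula S) := ruleEmb embEH P ∪ UNAax P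
def tauHPv {S : Sig} (P : Program S) : Set (Formula S) := ruleEmb embHP P ∪ PIAax P ∪ UNAax P
def tauEBv {S : Sig} (P : Program S) : Set (Formula S) := ruleEmb embEB P ∪ PIAax P ∪ UNAax P
def tauEHv {S : Sig} (P : Program S) : Set (Formula S) := ruleEmb embEH P ∪ UNAax P
def tauHPminus {S : Sig} (P : Program S) : Set (Formula S) := ruleEmb embHP P
def tauEHvminus {S : Sig} (P : Program S) : Set (Formula S) := ruleEmb embEH P

/-! ## Grounding and stable models -/

/-- The grounding of `P`: all ground instantiations of rules of `P`
obtained by replacing variables with names of `Σ_P`. -/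
def grP {S : Sig} (P : Program S) : Program S :=
  {r' | ∃ r ∈ P, ∃ σ : ℕ → Term S,
        (∀ x, r.hasVar x → (σ x).isNameOf (progFuncs P)) ∧ r' = Rule.applySubst σ r}

/-- A Herbrand interpretation: a set of ground atomic formulas. -/
def HerbrandI {S : Sig} (M : Set (Formula S)) : Prop :=
  ∀ φ ∈ M, φ.isAtomic ∧ φ.isGround

/-- `M` is a Herbrand model of the positive ground program `Q` (relative to the
names of `Σ_P`): rules are satisfied and `t = t ∈ M` for every name `t`. -/
def HerbrandModelOf {S : Sig} (P Q : Program S) (M : Set (Formula S)) : Prop :=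
  HerbrandI M ∧
  (∀ r ∈ Q, (∀ b ∈ r.pos, PAtom.toFormula b ∈ M) → ∃ h ∈ r.head, PAtom.toFormula h ∈ M) ∧
  (∀ t : Term S, t.isNameOf (progFuncs P) → Formula.eq t t ∈ M)

/-- The Gelfond–Lifschitz reduct of `gr(P)` with respect to `M`. -/
def reduct {S : Sig} (P : Program S) (M : Set (Formula S)) : Program S :=
  {r' | ∃ r ∈ grP P, (∀ c ∈ r.neg, PAtom.toFormula c ∉ M) ∧
        r' = ⟨r.head, r.pos, [], r.vars⟩}

/-- `M` is a stable model of `P`: a minimal Herbrand model of the reduct of `gr(P)` w.r.t. `M`. -/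
def isStableModel {S : Sig} (P : Program S) (M : Set (Formula S)) : Prop :=
  HerbrandModelOf P (reduct P M) M ∧
  ∀ M', M' ⊆ M → HerbrandModelOf P (reduct P M) M' → M' = M

/-! ## First-order theories and classes thereof -/

/-- An FO theory: a set of objective sentences. -/
def FOTheory {S : Sig} (Φ : Set (Formula S)) : Prop :=
  ∀ φ ∈ Φ, φ.isObjective ∧ φ.closed

def theoryFuncs {S : Sig} (Φ : Set (Formula S)) : Set S.Func := {f | ∃ φ ∈ Φ, f ∈ φ.funcs}
def theoryPreds {S : Sig} (Φ : Set (Formula S)) : Set S.Pred := {q | ∃ φ ∈ Φ, q ∈ φ.preds}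

/-- The ambient signature is exactly the union of the signatures of `Φ` and `P`. -/
def CoverSig {S : Sig} (Φ : Set (Formula S)) (P : Program S) : Prop :=
  (∀ f : S.Func, f ∈ theoryFuncs Φ ∪ progFuncs P) ∧
  (∀ q : S.Pred, q ∈ theoryPreds Φ ∪ progPreds P)

def exClosure {S : Sig} (ys : List ℕ) (φ : Formula S) : Formula S := ys.foldr Formula.ex φ

/-- A Horn sentence `(∀)(b₁ ∧ … ∧ b_n ⊃ h)` with atomic `b_i`, `h`
(the consequent `h` may be absent). -/
def isHornSentence {S : Sig} (φ : Formula S) : Prop :=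
  ∃ (vs : List ℕ) (bs : List (Formula S)),
    (∀ b ∈ bs, b.isAtomic) ∧
    ((∃ h : Formula S, h.isAtomic ∧ φ = uclosure vs (impOf bs h)) ∨
     (∃ b rest, bs = b :: rest ∧ φ = uclosure vs (Formula.not (andAll b rest))))

def HornTheory {S : Sig} (Φ : Set (Formula S)) : Prop :=
  FOTheory Φ ∧ ∀ φ ∈ Φ, isHornSentence φ

/-- A generalized Horn sentence `(∀)(b₁ ∧ … ∧ b_n ⊃ ∃ȳ.h)` with atomic `b_i`, `h`,
the variables `ȳ` occurring only in `h` (the consequent may be absent). -/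
def isGHornSentence {S : Sig} (φ : Formula S) : Prop :=
  ∃ (vs : List ℕ) (bs : List (Formula S)),
    (∀ b ∈ bs, b.isAtomic) ∧
    ((∃ (ys : List ℕ) (h : Formula S), h.isAtomic ∧
        (∀ y ∈ ys, ∀ b ∈ bs, ¬ b.freeIn y) ∧
        φ = uclosure vs (impOf bs (exClosure ys h))) ∨
     (∃ b rest, bs = b :: rest ∧ φ = uclosure vs (Formula.not (andAll b rest))))

def GHornTheory {S : Sig} (Φ : Set (Formula S)) : Prop :=
  FOTheory Φ ∧ ∀ φ ∈ Φ, isGHornSentence φ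

def PropTheory {S : Sig} (Φ : Set (Formula S)) : Prop :=
  FOTheory Φ ∧ ∀ φ ∈ Φ, φ.isPropositional

section helpers10
variable {S : Sig} {X : Sem} {w : Interp S} {T : Set (Formula S)}

theorem sat_or10 (φ ψ : Formula S) (B : ℕ → w.U) :
    Sat X w T (Formula.or φ ψ) B ↔ Sat X w T φ B ∨ Sat X w T ψ B := by
  simp only [Formula.or, Sat]; tauto

theorem sat_imp10 (φ ψ : Formula S) (B : ℕ → w.U) :
    Sat X w T (Formula.imp φ ψ) B ↔ (Sat X w T φ B → Sat X w T ψ B) := by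
  simp only [Formula.imp, Sat]; tauto

theorem sat_andAll10 (l : List (Formula S)) (φ : Formula S) (B : ℕ → w.U) :
    Sat X w T (andAll φ l) B ↔ Sat X w T φ B ∧ ∀ ψ ∈ l, Sat X w T ψ B := by
  induction l generalizing φ with
  | nil => simp [andAll]
  | cons a l ih => simp [andAll, ih, Sat, and_assoc]

theorem sat_orAll10 (l : List (Formula S)) (φ : Formula S) (B : ℕ → w.U) :
    Sat X w T (orAll φ l) B ↔ Sat X w T φ B ∨ ∃ ψ ∈ l, Sat X w T ψ B := by
  induction l generalizing φ with
  | nil => simp [orAll]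
  | cons a l ih => simp [orAll, ih, sat_or10, or_assoc]

theorem sat_impOf10 (l : List (Formula S)) (φ : Formula S) (B : ℕ → w.U) :
    Sat X w T (impOf l φ) B ↔ ((∀ ψ ∈ l, Sat X w T ψ B) → Sat X w T φ B) := by
  cases l with
  | nil => simp [impOf]
  | cons a l => simp [impOf, sat_imp10, sat_andAll10]

theorem sat_disjOf10 (l : List (Formula S)) (hl : l ≠ []) (B : ℕ → w.U) :
    Sat X w T (disjOf l) B ↔ ∃ ψ ∈ l, Sat X w T ψ B := by
  cases l with
  | nil => exact absurd rfl hl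
  | cons a l => simp [disjOf, sat_orAll10]

theorem sat_uclosure10 (vs : List ℕ) (φ ψ : Formula S)
    (h : ∀ B : ℕ → w.U, Sat X w T φ B → Sat X w T ψ B) (B : ℕ → w.U) :
    Sat X w T (uclosure vs φ) B → Sat X w T (uclosure vs ψ) B := by
  induction vs generalizing B with
  | nil => exact h B
  | cons v vs ih =>
    simp only [uclosure, List.foldr_cons, Formula.all, Sat, not_exists, not_not] at ih ⊢
    exact fun H u => ih _ (H u)

theorem exists_assoc10 (w : Interp S) (B : ℕ → w.U) : ∃ β, Assoc w B β := by
  have : ∀ x : ℕ, ∃ o : Option (Term S), (IsNamed w (B x) → o.isSome) ∧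
      (∀ t : Term S, o = some t → t.isGround ∧ Term.evalG w t = B x) := by
    intro x
    by_cases h : IsNamed w (B x)
    · obtain ⟨t, ht⟩ := h
      exact ⟨some t, by simp, by rintro _ ⟨⟩; exact ht⟩
    · exact ⟨none, fun h' => absurd h' h, by simp⟩
  choose β hβ using this
  exact ⟨β, hβ⟩

theorem box_assoc10 (φ : Formula S) (B : ℕ → w.U) (h : Sat X w T (Formula.box φ) B) :
    ∃ β, Assoc w B β ∧ (φ.subst β).closed ∧ φ.subst β ∈ T := by
  cases X with
  | any => exact h
  | all =>
    obtain ⟨β, hβ⟩ := exists_assoc10 w B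
    exact ⟨β, hβ, h β hβ⟩

theorem hasVar_subst10 (β : ℕ → Option (Term S)) (x : ℕ) (t : Term S) (h : t.hasVar x)
    (hn : β x = none) : (t.subst β).hasVar x := by
  induction t with
  | var y => simp only [Term.hasVar] at h; subst h; simp [Term.subst, hn, Term.hasVar]
  | func f ts ih =>
    obtain ⟨i, hi⟩ := h
    exact ⟨i, ih i hi⟩

theorem ground_subst10 (β : ℕ → Option (Term S)) (t : Term S)
    (hg : ∀ x t, β x = some t → t.isGround)
    (h : ∀ x, t.hasVar x → (β x).isSome) : (t.subst β).isGround := by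
  induction t with
  | var y =>
    obtain ⟨t, ht⟩ := Option.isSome_iff_exists.1 (h y rfl)
    simp only [Term.subst, ht, Option.getD_some]
    exact hg _ _ ht
  | func f ts ih => exact fun i => ih i (fun x hx => h x ⟨i, hx⟩)

theorem ground_hasVar10 (t : Term S) (x : ℕ) (h : t.isGround) : ¬ t.hasVar x := by
  induction t with
  | var y => exact h.elim
  | func f ts ih => rintro ⟨i, hi⟩; exact ih i (h i) hi

theorem ground_subst_id10 (β : ℕ → Option (Term S)) (t : Term S) (h : t.isGround) :
    t.subst β = t := by
  induction t with
  | var y => exact h.elim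
  | func f ts ih => simp only [Term.subst]; congr 1; funext i; exact ih i (h i)

theorem ground_eval10 (B B' : ℕ → w.U) (t : Term S) (h : t.isGround) :
    t.eval w B = t.eval w B' := by
  induction t with
  | var y => exact h.elim
  | func f ts ih => simp only [Term.eval]; congr 1; funext i; exact ih i (h i)

theorem ground_name10 (F : Set S.Func) (hF : ∀ f, f ∈ F) (t : Term S) (h : t.isGround) :
    t.isNameOf F := by
  induction t with
  | var y => exact h.elim
  | func f ts ih => exact ⟨hF f, fun i => ih i (h i)⟩

theorem subst_eval10 (B : ℕ → w.U) (β : ℕ → Option (Term S)) (hβ : Assoc w B β) (t : Term S) :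
    (t.subst β).eval w B = t.eval w B := by
  induction t with
  | var y =>
    cases hy : β y with
    | none => simp [Term.subst, hy]
    | some t =>
      obtain ⟨h1, h2⟩ := (hβ y).2 t hy
      simp only [Term.subst, hy, Option.getD_some]
      rw [ground_eval10 B (fun _ => w.dflt) t h1]
      exact h2
  | func f ts ih => simp only [Term.eval, Term.subst]; congr 1; funext i; exact ih i

theorem box_named10 (a : PAtom S) (B : ℕ → w.U)
    (h : Sat X w T (Formula.box a.toFormula) B) (x : ℕ) (hx : a.hasVar x) :
    IsNamed w (B x) := by
  obtain ⟨β, hβ, hc, -⟩ := box_assoc10 _ _ h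
  cases hy : β x with
  | some t => exact ⟨t, (hβ x).2 t hy⟩
  | none =>
    obtain ⟨i, hi⟩ := hx
    exact absurd ⟨i, hasVar_subst10 β x _ hi hy⟩ (hc x)

theorem head_box10 (P : Program S) (hfull : fullSig P) (hpia : ModelsT X w T (PIAax P))
    (a : PAtom S) (B : ℕ → w.U) (ha : Sat X w T a.toFormula B)
    (hn : ∀ x, a.hasVar x → IsNamed w (B x)) : Sat X w T (Formula.box a.toFormula) B := by
  have key : ∀ β, Assoc w B β →
      (a.toFormula.subst β).closed ∧ a.toFormula.subst β ∈ T := by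
    intro β hβ
    have hg : ∀ i, ((a.args i).subst β).isGround := fun i =>
      ground_subst10 β _ (fun x t h => ((hβ x).2 t h).1)
        (fun x hx => (hβ x).1 (hn x ⟨i, hx⟩))
    let a' : PAtom S := ⟨a.p, fun i => (a.args i).subst β⟩
    have h1 := hpia _ ⟨a', hfull.2 _, fun i => ground_name10 _ hfull.1 _ (hg i), rfl⟩ B
    rw [sat_imp10] at h1
    have h2 : Sat X w T a'.toFormula B := by
      simp only [PAtom.toFormula, Sat, a'] at ha ⊢
      simpa only [subst_eval10 B β hβ] using ha
    obtain ⟨γ, -, hc, hT⟩ := box_assoc10 _ _ (h1 h2)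
    have e : a'.toFormula.subst γ = a.toFormula.subst β := by
      simp only [PAtom.toFormula, Formula.subst, a']
      congr 1; funext i; exact ground_subst_id10 _ _ (hg i)
    rw [e] at hc hT
    exact ⟨hc, hT⟩
  cases X with
  | any => obtain ⟨β, hβ⟩ := exists_assoc10 w B; exact ⟨β, hβ, key β hβ⟩
  | all => exact key

end helpers10

/-- For every disjunctive program `P` and autoepistemic
interpretation `⟨w,T⟩`: if `w ⊨ˣ_T τ^∨_HP(P)` then `w ⊨ˣ_T τ^∨_EB(P)`;
and if `P` is safe then `w ⊨ˣ_T τ^∨_EB(P)` implies `w ⊨ˣ_T τ^∨_EH(P)`. -/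
theorem stmt10 {S : Sig} (X : Sem) (P : Program S)
    (hwf : progWf P) (hfull : fullSig P) (hgood : goodSig P)
    (w : Interp S) (T : Set (Formula S)) :
    (ModelsT X w T (tauHPv P) → ModelsT X w T (tauEBv P)) ∧
    (progSafe P → ModelsT X w T (tauEBv P) → ModelsT X w T (tauEHv P)) := by
  refine ⟨?_, ?_⟩
  · rintro H φ ((⟨r, hr, rfl⟩ | h) | h)
    · intro B
      refine sat_uclosure10 _ _ _ ?_ B (H _ (Or.inl (Or.inl ⟨r, hr, rfl⟩)) B)
      intro B
      rw [sat_impOf10, sat_impOf10]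
      intro h hb
      refine h (fun ψ hψ => ?_)
      rcases List.mem_append.1 hψ with h1 | h1
      · obtain ⟨b, hb1, rfl⟩ := List.mem_map.1 h1
        exact (hb _ (List.mem_append_left _ (List.mem_map.2 ⟨b, hb1, rfl⟩))).1
      · exact hb _ (List.mem_append_right _ h1)
    · exact H _ (Or.inl (Or.inr h))
    · exact H _ (Or.inr h)
  · rintro hs H φ (⟨r, hr, rfl⟩ | h)
    · intro B
      refine sat_uclosure10 _ _ _ ?_ B (H _ (Or.inl (Or.inl ⟨r, hr, rfl⟩)) B)
      intro B
      have hne := (hwf r hr).1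
      rw [sat_impOf10, sat_impOf10, sat_disjOf10 _ (by simpa using hne),
        sat_disjOf10 _ (by simpa using hne)]
      intro h hb
      obtain ⟨ψ, hψ, hsat⟩ := h hb
      obtain ⟨a, ha, rfl⟩ := List.mem_map.1 hψ
      refine ⟨_, List.mem_map.2 ⟨a, ha, rfl⟩, hsat, ?_⟩
      refine head_box10 P hfull (fun φ hφ => H φ (Or.inl (Or.inr hφ))) a B hsat ?_
      intro x hx
      obtain ⟨b, hb1, hbx⟩ := hs r hr x ⟨a, by simp [Rule.atoms, ha], hx⟩
      exact box_named10 b B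
        (hb _ (List.mem_append_left _ (List.mem_map.2 ⟨b, hb1, rfl⟩))).2 x hbx
    · exact H _ (Or.inr h)
end

section
/- Let X ∈ {E,A}. For every normal logic program P: Cnˣ_o(τ_EH(P)) = Cnˣ_o(τ^∨_EH(P)), Cnˣ_o(τ_EB(P)) ⊆ Cnˣ_o(τ_EH(P)), Cnˣ_o(τ_EB(P)) ⊆ Cnˣ_o(τ_HP(P)), Cnˣ_o(τ_HP(P)) ⊆ Cnˣ_o(τ^∨_HP(P)), and Cnˣ_o(τ_EB(P)) ⊆ Cnˣ_o(τ^∨_EB(P)); if P is moreover safe, then also Cnˣ_o(τ_EH(P)) ⊆ Cnˣ_o(τ_EB(P)). For every disjunctive logic program P: Cnˣ_o(τ^∨_EB(P)) ⊆ Cnˣ_o(τ^∨_HP(P)); and if P is safe, Cnˣ_o(τ^∨_EH(P)) ⊆ Cnˣ_o(τ^∨_EB(P)). -/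
set_option autoImplicit false

namespace Aux

section A
variable {S : Sig}

theorem ground_noVar (t : Term S) : t.isGround ↔ ∀ x, ¬ t.hasVar x := by
  induction t with
  | var y => simp [Term.isGround, Term.hasVar]
  | func f ts ih =>
    simp only [Term.isGround, Term.hasVar, ih, not_exists]
    exact ⟨fun h x i => h i x, fun h i x => h x i⟩

theorem name_of_ground {P : Program S} (hf : fullSig P) (t : Term S) (h : t.isGround) :
    t.isNameOf (progFuncs P) := by
  induction t with
  | var y => exact h.elim
  | func f ts ih => exact ⟨hf.1 f, fun i => ih i (h i)⟩

theorem ground_of_name {F : Set S.Func} (t : Term S) (h : t.isNameOf F) :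
    t.isGround := by
  induction t with
  | var y => exact h.elim
  | func f ts ih => exact fun i => ih i (h.2 i)

theorem ground_subst (β : ℕ → Option (Term S)) (t : Term S) (h : t.isGround) :
    t.subst β = t := by
  induction t with
  | var y => exact h.elim
  | func f ts ih =>
    simp only [Term.subst]
    congr 1
    funext i
    exact ih i (h i)

theorem ground_eval (w : Interp S) (B B' : ℕ → w.U) (t : Term S) (h : t.isGround) :
    t.eval w B = t.eval w B' := by
  induction t with
  | var y => exact h.elim
  | func f ts ih =>
    simp only [Term.eval]
    congr 1
    funext i
    exact ih i (h i)

theorem ground_evalG (w : Interp S) (B : ℕ → w.U) (t : Term S) (h : t.isGround) :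
    t.eval w B = t.evalG w := ground_eval w _ _ t h

theorem eval_subst {w : Interp S} {B : ℕ → w.U} {β : ℕ → Option (Term S)}
    (hβ : Assoc w B β) (t : Term S) : (t.subst β).eval w B = t.eval w B := by
  induction t with
  | var y =>
    simp only [Term.subst, Term.eval]
    cases hy : β y with
    | none => rfl
    | some s =>
      have := (hβ y).2 s hy
      simp only [Option.getD_some]
      rw [ground_evalG w B s this.1, this.2]
  | func f ts ih =>
    simp only [Term.subst, Term.eval]
    congr 1
    funext i
    exact ih i

theorem assoc_exists (w : Interp S) (B : ℕ → w.U) : ∃ β, Assoc w B β := by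
  classical
  refine ⟨fun x => if h : IsNamed w (B x) then some h.choose else none, fun x => ⟨?_, ?_⟩⟩
  · intro h; simp [h]
  · intro t ht
    by_cases h : IsNamed w (B x)
    · simp only [h, dif_pos, Option.some.injEq] at ht
      subst ht
      exact h.choose_spec
    · simp [h] at ht

/-- all variables of the atom are named -/
def Nm (w : Interp S) (B : ℕ → w.U) (a : PAtom S) : Prop :=
  ∀ x, a.hasVar x → IsNamed w (B x)

theorem subst_ground_iff {w : Interp S} {B : ℕ → w.U} {β : ℕ → Option (Term S)}
    (hβ : Assoc w B β) (t : Term S) :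
    (t.subst β).isGround ↔ ∀ x, t.hasVar x → IsNamed w (B x) := by
  induction t with
  | var y =>
    simp only [Term.subst, Term.hasVar, forall_eq']
    constructor
    · intro h
      cases hy : β y with
      | none => rw [hy] at h; exact h.elim
      | some s => exact ⟨s, (hβ y).2 s hy⟩
    · intro h
      obtain ⟨s, hs⟩ := Option.isSome_iff_exists.1 ((hβ y).1 h)
      rw [hs]; exact ((hβ y).2 s hs).1
  | func f ts ih =>
    simp only [Term.subst, Term.hasVar, Term.isGround, ih]
    exact ⟨fun h x ⟨i, hi⟩ => h i x hi, fun h i x hi => h x ⟨i, hi⟩⟩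

theorem atom_closed (p : S.Pred) (ts : Fin (S.arP p) → Term S) :
    (Formula.atom p ts).closed ↔ ∀ i, (ts i).isGround := by
  simp only [Formula.closed, Formula.freeIn, ground_noVar, not_exists]
  exact ⟨fun h i x => h x i, fun h x i => h i x⟩

theorem eq_closed (t s : Term S) :
    (Formula.eq t s).closed ↔ t.isGround ∧ s.isGround := by
  simp only [Formula.closed, Formula.freeIn, ground_noVar, not_or, forall_and]

theorem subst_closed_iff {w : Interp S} {B : ℕ → w.U} {β : ℕ → Option (Term S)}
    (hβ : Assoc w B β) (a : PAtom S) :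
    (a.toFormula.subst β).closed ↔ Nm w B a := by
  simp only [PAtom.toFormula, Formula.subst, atom_closed, subst_ground_iff hβ, Nm, PAtom.hasVar]
  exact ⟨fun h x ⟨i, hi⟩ => h i x hi, fun h i x hi => h x ⟨i, hi⟩⟩

/-! ### semantics of connectives -/

variable {X : Sem} {w : Interp S} {Γ : Set (Formula S)}

theorem sat_and (φ ψ : Formula S) (B : ℕ → w.U) :
    Sat X w Γ (φ.and ψ) B ↔ Sat X w Γ φ B ∧ Sat X w Γ ψ B := by simp only [Sat]
theorem sat_not (φ : Formula S) (B : ℕ → w.U) :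
    Sat X w Γ φ.not B ↔ ¬ Sat X w Γ φ B := by simp only [Sat]
theorem sat_imp (φ ψ : Formula S) (B : ℕ → w.U) :
    Sat X w Γ (φ.imp ψ) B ↔ (Sat X w Γ φ B → Sat X w Γ ψ B) := by
  simp only [Formula.imp, sat_not, sat_and]; tauto
theorem sat_or (φ ψ : Formula S) (B : ℕ → w.U) :
    Sat X w Γ (φ.or ψ) B ↔ (Sat X w Γ φ B ∨ Sat X w Γ ψ B) := by
  simp only [Formula.or, sat_not, sat_and]; tauto
theorem sat_all (x : ℕ) (φ : Formula S) (B : ℕ → w.U) :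
    Sat X w Γ (φ.all x) B ↔ ∀ u, Sat X w Γ φ (Function.update B x u) := by
  simp only [Formula.all, Sat, not_exists, not_not]

theorem models_uclosure (vs : List ℕ) (φ : Formula S) :
    ModelsF X w Γ (uclosure vs φ) ↔ ModelsF X w Γ φ := by
  induction vs with
  | nil => rfl
  | cons x vs ih =>
    rw [← ih]
    simp only [uclosure, List.foldr_cons, ModelsF, sat_all]
    constructor
    · intro h B
      have := h B (B x)
      rwa [Function.update_eq_self] at this
    · intro h B u
      exact h _

theorem sat_andAll (l : List (Formula S)) (φ : Formula S) (B : ℕ → w.U) :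
    Sat X w Γ (andAll φ l) B ↔ Sat X w Γ φ B ∧ ∀ a ∈ l, Sat X w Γ a B := by
  induction l generalizing φ with
  | nil => simp [andAll]
  | cons a l ih => simp [andAll, ih, sat_and, and_assoc]

theorem sat_orAll (l : List (Formula S)) (φ : Formula S) (B : ℕ → w.U) :
    Sat X w Γ (orAll φ l) B ↔ Sat X w Γ φ B ∨ ∃ a ∈ l, Sat X w Γ a B := by
  induction l generalizing φ with
  | nil => simp [orAll]
  | cons a l ih => simp [orAll, ih, sat_or, or_assoc]

theorem sat_impOf (l : List (Formula S)) (c : Formula S) (B : ℕ → w.U) :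
    Sat X w Γ (impOf l c) B ↔ ((∀ a ∈ l, Sat X w Γ a B) → Sat X w Γ c B) := by
  cases l with
  | nil => simp [impOf]
  | cons a l => simp only [impOf, sat_imp, sat_andAll, List.forall_mem_cons]

theorem sat_disjOf (l : List (Formula S)) (hl : l ≠ []) (B : ℕ → w.U) :
    Sat X w Γ (disjOf l) B ↔ ∃ a ∈ l, Sat X w Γ a B := by
  cases l with
  | nil => exact (hl rfl).elim
  | cons a l => simp only [disjOf, sat_orAll, List.exists_mem_cons_iff]

/-- belief in an atom -/
def Bel (X : Sem) (w : Interp S) (Γ : Set (Formula S)) (B : ℕ → w.U) (a : PAtom S) : Prop :=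
  Sat X w Γ (Formula.box a.toFormula) B
/-- truth of an atom -/
def Tr (w : Interp S) (B : ℕ → w.U) (a : PAtom S) : Prop :=
  w.interpP a.p (fun i => (a.args i).eval w B)

theorem sat_tr (a : PAtom S) (B : ℕ → w.U) : Sat X w Γ a.toFormula B ↔ Tr w B a := by
  simp only [PAtom.toFormula, Sat, Tr]

theorem models_HP (r : Rule S) (hr : r.head ≠ []) : ModelsF X w Γ (embHP r) ↔
    ∀ B, (∀ b ∈ r.pos, Tr w B b) → (∀ c ∈ r.neg, ¬ Bel X w Γ B c) → ∃ h ∈ r.head, Tr w B h := by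
  rw [embHP, models_uclosure, ModelsF]
  refine forall_congr' fun B => ?_
  rw [sat_impOf, sat_disjOf _ (by simpa using hr)]
  simp only [bodyHP, List.forall_mem_append, List.forall_mem_map]
  simp only [List.mem_map, exists_exists_and_eq_and, sat_not, sat_tr, and_imp]
  rfl

theorem models_EB (r : Rule S) (hr : r.head ≠ []) : ModelsF X w Γ (embEB r) ↔
    ∀ B, (∀ b ∈ r.pos, Tr w B b ∧ Bel X w Γ B b) →
      (∀ c ∈ r.neg, ¬ Bel X w Γ B c) → ∃ h ∈ r.head, Tr w B h := by
  rw [embEB, models_uclosure, ModelsF]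
  refine forall_congr' fun B => ?_
  rw [sat_impOf, sat_disjOf _ (by simpa using hr)]
  simp only [bodyE, List.forall_mem_append, List.forall_mem_map]
  simp only [List.mem_map, exists_exists_and_eq_and, sat_not,
    sat_and, sat_tr, and_imp]
  rfl

theorem models_EH (r : Rule S) (hr : r.head ≠ []) : ModelsF X w Γ (embEH r) ↔
    ∀ B, (∀ b ∈ r.pos, Tr w B b ∧ Bel X w Γ B b) →
      (∀ c ∈ r.neg, ¬ Bel X w Γ B c) → ∃ h ∈ r.head, Tr w B h ∧ Bel X w Γ B h := by
  rw [embEH, models_uclosure, ModelsF]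
  refine forall_congr' fun B => ?_
  rw [sat_impOf, sat_disjOf _ (by simpa using hr)]
  simp only [bodyE, List.forall_mem_append, List.forall_mem_map]
  simp only [List.mem_map, exists_exists_and_eq_and, sat_not,
    sat_and, sat_tr, and_imp]
  rfl

/-! ### boxAtomic -/

theorem ba_andAll (l : List (Formula S)) (φ : Formula S) (h : φ.boxAtomic)
    (hl : ∀ a ∈ l, a.boxAtomic) : (andAll φ l).boxAtomic := by
  induction l generalizing φ with
  | nil => exact h
  | cons a l ih =>
    exact ih _ ⟨h, hl a (by simp)⟩ (fun b hb => hl b (by simp [hb]))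

theorem ba_orAll (l : List (Formula S)) (φ : Formula S) (h : φ.boxAtomic)
    (hl : ∀ a ∈ l, a.boxAtomic) : (orAll φ l).boxAtomic := by
  induction l generalizing φ with
  | nil => exact h
  | cons a l ih =>
    exact ih _ ⟨h, hl a (by simp)⟩ (fun b hb => hl b (by simp [hb]))

theorem ba_impOf (l : List (Formula S)) (c : Formula S) (h : c.boxAtomic)
    (hl : ∀ a ∈ l, a.boxAtomic) : (impOf l c).boxAtomic := by
  cases l with
  | nil => exact h
  | cons a l =>
    exact ⟨ba_andAll l a (hl a (by simp)) (fun b hb => hl b (by simp [hb])), h⟩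

theorem ba_disjOf (l : List (Formula S)) 
    (hl : ∀ a ∈ l, a.boxAtomic) : (disjOf l).boxAtomic := by
  cases l with
  | nil => trivial
  | cons a l =>
    exact ba_orAll l a (hl a (by simp)) (fun b hb => hl b (by simp [hb]))

theorem ba_uclosure (vs : List ℕ) (φ : Formula S) (h : φ.boxAtomic) :
    (uclosure vs φ).boxAtomic := by
  induction vs with
  | nil => exact h
  | cons x vs ih => exact ih

theorem ba_HP (r : Rule S) : (embHP r).boxAtomic := by
  refine ba_uclosure _ _ (ba_impOf _ _ (ba_disjOf _ ?_) ?_)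
  · simp [PAtom.toFormula, Formula.boxAtomic]
  · simp only [bodyHP, List.forall_mem_append, List.forall_mem_map]
    simp [PAtom.toFormula, Formula.boxAtomic, Formula.isAtomic]

theorem ba_bodyE (r : Rule S) : ∀ a ∈ bodyE r, a.boxAtomic := by
  simp only [bodyE, List.forall_mem_append, List.forall_mem_map]
  simp [PAtom.toFormula, Formula.boxAtomic, Formula.isAtomic]

theorem ba_EB (r : Rule S) : (embEB r).boxAtomic := by
  refine ba_uclosure _ _ (ba_impOf _ _ (ba_disjOf _ ?_) (ba_bodyE r))
  simp [PAtom.toFormula, Formula.boxAtomic]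

theorem ba_EH (r : Rule S) : (embEH r).boxAtomic := by
  refine ba_uclosure _ _ (ba_impOf _ _ (ba_disjOf _ ?_) (ba_bodyE r))
  simp [PAtom.toFormula, Formula.boxAtomic, Formula.isAtomic]

theorem ba_UNA (P : Program S) : ∀ φ ∈ UNAax P, φ.boxAtomic := by
  rintro φ ⟨t, s, _, _, _, rfl⟩
  simp [Formula.imp, Formula.boxAtomic, Formula.isAtomic]

theorem ba_PIA (P : Program S) : ∀ φ ∈ PIAax P, φ.boxAtomic := by
  rintro φ ⟨a, _, _, rfl⟩
  simp [Formula.imp, PAtom.toFormula, Formula.boxAtomic, Formula.isAtomic]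

/-! ### dependence on the belief set -/

def depth : Formula S → ℕ
  | .atom _ _ => 0
  | .eq _ _ => 0
  | .not φ => depth φ
  | .and φ ψ => max (depth φ) (depth ψ)
  | .ex _ φ => depth φ
  | .box φ => depth φ + 1

theorem depth_subst (φ : Formula S) (β : ℕ → Option (Term S)) :
    depth (φ.subst β) = depth φ := by
  induction φ generalizing β with
  | atom _ _ => rfl
  | eq _ _ => rfl
  | not φ ih => exact ih β
  | and φ ψ ih1 ih2 => simp only [Formula.subst, depth, ih1, ih2]
  | ex y φ ih => exact ih _
  | box φ ih => simp only [Formula.subst, depth, ih]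

theorem atomic_subst (φ : Formula S) (β : ℕ → Option (Term S)) (h : φ.isAtomic) :
    (φ.subst β).isAtomic := by
  cases φ <;> trivial

theorem obj_depth (φ : Formula S) (h : φ.isObjective) : depth φ = 0 := by
  induction φ with
  | atom _ _ => rfl
  | eq _ _ => rfl
  | not φ ih => exact ih h
  | and φ ψ ih1 ih2 => simp [depth, ih1 h.1, ih2 h.2]
  | ex y φ ih => exact ih h
  | box φ ih => exact h.elim

theorem sat_box_congr {Γ' : Set (Formula S)} (φ : Formula S) (B : ℕ → w.U)
    (h : ∀ β, (φ.subst β).closed → (φ.subst β ∈ Γ ↔ φ.subst β ∈ Γ')) :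
    Sat X w Γ φ.box B ↔ Sat X w Γ' φ.box B := by
  cases X
  · simp only [Sat]
    refine exists_congr fun β => and_congr_right fun _ => and_congr_right fun hc => h β hc
  · simp only [Sat]
    refine forall_congr' fun β => imp_congr_right fun _ => and_congr_right fun hc => h β hc

theorem sat_depth_congr {Γ' : Set (Formula S)} (n : ℕ)
    (h : ∀ φ, depth φ < n → (φ ∈ Γ ↔ φ ∈ Γ')) (φ : Formula S) (hφ : depth φ ≤ n)
    (B : ℕ → w.U) : Sat X w Γ φ B ↔ Sat X w Γ' φ B := by
  induction φ generalizing B with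
  | atom _ _ => simp only [Sat]
  | eq _ _ => simp only [Sat]
  | not φ ih => simp only [Sat, ih hφ]
  | and φ ψ ih1 ih2 =>
    simp only [depth, max_le_iff] at hφ
    simp only [Sat, ih1 hφ.1, ih2 hφ.2]
  | ex y φ ih => simp only [Sat, ih hφ]
  | box φ ih =>
    refine sat_box_congr φ B fun β _ => h _ ?_
    rw [depth_subst]; exact hφ

theorem sat_ba_congr {Γ' : Set (Formula S)}
    (h : ∀ φ : Formula S, φ.isAtomic → φ.closed → (φ ∈ Γ ↔ φ ∈ Γ')) (φ : Formula S)
    (hφ : φ.boxAtomic)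
    (B : ℕ → w.U) : Sat X w Γ φ B ↔ Sat X w Γ' φ B := by
  induction φ generalizing B with
  | atom _ _ => simp only [Sat]
  | eq _ _ => simp only [Sat]
  | not φ ih => simp only [Sat, ih hφ]
  | and φ ψ ih1 ih2 => simp only [Sat, ih1 hφ.1, ih2 hφ.2]
  | ex y φ ih => simp only [Sat]; exact exists_congr fun u => ih hφ _
  | box φ ih =>
    exact sat_box_congr φ B fun β hc => h _ (atomic_subst φ β hφ) hc

def G (X : Sem) (Φ Γ : Set (Formula S)) : ℕ → Set (Formula S)
  | 0 => Γ
  | n + 1 => {φ | ∀ w : Interp S, ModelsT X w Γ Φ → ModelsF X w (G X Φ Γ n) φ}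

theorem G_step (X : Sem) (Φ Γ : Set (Formula S)) (n : ℕ) :
    ∀ φ, depth φ < n → (φ ∈ G X Φ Γ n ↔ φ ∈ G X Φ Γ (n+1)) := by
  induction n with
  | zero => intro φ h; omega
  | succ n ih =>
    intro φ h
    simp only [G, Set.mem_ofPred_eq]
    refine forall_congr' fun w => imp_congr_right fun _ => forall_congr' fun B => ?_
    exact sat_depth_congr n ih φ (by omega) B

theorem G_le (X : Sem) (Φ Γ : Set (Formula S)) (φ : Formula S) (n m : ℕ) (h : depth φ < n)
    (hm : n ≤ m) : φ ∈ G X Φ Γ n ↔ φ ∈ G X Φ Γ m := by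
  induction m, hm using Nat.le_induction with
  | base => rfl
  | succ m hm ih => rw [ih]; exact G_step X Φ Γ m φ (by omega)

theorem exists_exp (X : Sem) (Φ Γ : Set (Formula S)) (hΦ : ∀ φ ∈ Φ, φ.boxAtomic)
    (h : ∀ φ : Formula S, φ.isAtomic → φ.closed → (φ ∈ Γ ↔ Entails X Φ Γ φ)) :
    ∃ T, StableExp X Φ T ∧ ∀ φ ∈ T, φ.isObjective → Entails X Φ Γ φ := by
  have hobj : ∀ φ : Formula S, depth φ = 0 → (φ ∈ G X Φ Γ 1 ↔ Entails X Φ Γ φ) := by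
    intro φ hφ
    simp only [G, Set.mem_ofPred_eq, Entails]
  refine ⟨{φ | φ ∈ G X Φ Γ (depth φ + 1)}, ?_, ?_⟩
  · set T : Set (Formula S) := {φ | φ ∈ G X Φ Γ (depth φ + 1)} with hT
    have hag : ∀ n, ∀ φ, depth φ < n → (φ ∈ T ↔ φ ∈ G X Φ Γ n) := by
      intro n φ hn
      exact G_le X Φ Γ φ _ _ (by omega) hn
    have hmod : ∀ w : Interp S, ModelsT X w T Φ ↔ ModelsT X w Γ Φ := by
      intro w
      refine forall_congr' fun φ => forall_congr' fun hφ => forall_congr' fun B => ?_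
      refine sat_ba_congr ?_ φ (hΦ φ hφ) B
      intro α ha hc
      have hd : depth α = 0 := by cases α <;> first | rfl | exact ha.elim
      rw [h α ha hc, ← hobj α hd]
      exact hag 1 α (by omega)
    unfold StableExp
    ext φ
    have : φ ∈ T ↔ φ ∈ G X Φ Γ (depth φ + 1) := Iff.rfl
    rw [this]
    simp only [G, Set.mem_ofPred_eq, Entails]
    refine forall_congr' fun w => ?_
    rw [hmod w]
    refine imp_congr_right fun _ => forall_congr' fun B => ?_
    exact sat_depth_congr (depth φ) (fun ψ hψ => (hag _ ψ hψ).symm) φ le_rfl B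
  · intro φ hφ ho
    have hd := obj_depth φ ho
    rw [Set.mem_ofPred_eq, hd] at hφ
    exact (hobj φ hd).1 hφ

theorem main_incl (X : Sem) (Φ Ψ : Set (Formula S)) (hΦ : ∀ φ ∈ Φ, φ.boxAtomic)
    (h1 : ∀ T, StableExp X Ψ T → ∀ w, ModelsT X w T Ψ → ModelsT X w T Φ)
    (h2 : ∀ T, StableExp X Ψ T → ∀ w, ModelsT X w T Φ → ∃ w', ModelsT X w' T Ψ ∧
      ∀ α : Formula S, α.isAtomic → α.closed → ModelsF X w' T α → ModelsF X w T α) :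
    CnO X Φ ⊆ CnO X Ψ := by
  rintro φ ⟨hφ, ho⟩
  refine ⟨fun T hT => ?_, ho⟩
  have hmem : ∀ ψ, ψ ∈ T ↔ Entails X Ψ T ψ := fun ψ => by
    conv_lhs => rw [hT]
    rfl
  obtain ⟨T', hT', hsub⟩ := exists_exp X Φ T hΦ (by
    intro α ha hc
    rw [hmem]
    constructor
    · intro h w hw
      obtain ⟨w', hw', hα⟩ := h2 T hT w hw
      exact hα α ha hc (h w' hw')
    · intro h w hw
      exact h w (h1 T hT w hw))
  rw [hmem]
  intro w hw
  exact hsub φ (hφ T' hT') ho w (h1 T hT w hw)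

/-! ### equality of names -/

theorem mem_stable {Ψ T : Set (Formula S)} (hT : StableExp X Ψ T) (φ : Formula S) :
    φ ∈ T ↔ Entails X Ψ T φ := by
  conv_lhs => rw [hT]
  rfl

theorem box_ground {T : Set (Formula S)} {φ : Formula S} (B : ℕ → w.U)
    (hg : ∀ β, φ.subst β = φ) (h : Sat X w T φ.box B) : φ ∈ T := by
  cases X
  · simp only [Sat] at h
    obtain ⟨β, _, _, h⟩ := h
    rwa [hg] at h
  · simp only [Sat] at h
    obtain ⟨β, hβ⟩ := assoc_exists w B
    have := (h β hβ).2
    rwa [hg] at this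

theorem una_eq {P : Program S} (hf : fullSig P) {Ψ T : Set (Formula S)} (hT : StableExp X Ψ T)
    (hu : ModelsT X w T (UNAax P)) {t s : Term S} (ht : t.isGround) (hs : s.isGround)
    (he : t.evalG w = s.evalG w) : Formula.eq t s ∈ T := by
  by_cases hts : t = s
  · subst hts
    rw [mem_stable hT]
    intro w' _ B
    simp only [Sat]
  · have B : ℕ → w.U := fun _ => w.dflt
    have := hu _ ⟨t, s, name_of_ground hf t ht, name_of_ground hf s hs, hts, rfl⟩ B
    rw [sat_imp, sat_not, sat_not] at this
    refine box_ground B ?_ (by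
      by_contra hb
      apply this hb
      simp only [Sat]
      rw [ground_evalG _ _ _ ht, ground_evalG _ _ _ hs, he])
    intro β
    simp only [Formula.subst, ground_subst β _ ht, ground_subst β _ hs]

theorem repl {P : Program S} (hf : fullSig P) {Ψ T : Set (Formula S)} (hT : StableExp X Ψ T)
    (hu : ModelsT X w T (UNAax P)) {p : S.Pred} {ts ss : Fin (S.arP p) → Term S}
    (ht : ∀ i, (ts i).isGround) (hs : ∀ i, (ss i).isGround)
    (he : ∀ i, (ts i).evalG w = (ss i).evalG w) (hm : Formula.atom p ts ∈ T) :
    Formula.atom p ss ∈ T := by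
  rw [mem_stable hT]
  intro w' hw' B
  have h1 := (mem_stable hT _).1 hm w' hw' B
  simp only [Sat] at h1 ⊢
  convert h1 using 2 with i
  have := (mem_stable hT _).1 (una_eq hf hT hu (ht i) (hs i) (he i)) w' hw' B
  simp only [Sat] at this
  exact this.symm

theorem bel_iff {P : Program S} (hf : fullSig P) {Ψ T : Set (Formula S)} (hT : StableExp X Ψ T)
    (hu : ModelsT X w T (UNAax P)) {B : ℕ → w.U} {β : ℕ → Option (Term S)}
    (hβ : Assoc w B β) (a : PAtom S) :
    Bel X w T B a ↔ Nm w B a ∧ a.toFormula.subst β ∈ T := by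
  have key : ∀ β', Assoc w B β' → Nm w B a → ∀ β'', Assoc w B β'' → 
      a.toFormula.subst β' ∈ T → a.toFormula.subst β'' ∈ T := by
    intro β' hβ' hn β'' hβ'' hm
    have h1 := (subst_closed_iff hβ' a).2 hn
    have h2 := (subst_closed_iff hβ'' a).2 hn
    simp only [PAtom.toFormula, Formula.subst, atom_closed] at h1 h2 hm ⊢
    refine repl hf hT hu h1 h2 (fun i => ?_) hm
    rw [← ground_evalG w B _ (h1 i), ← ground_evalG w B _ (h2 i), eval_subst hβ', eval_subst hβ'']
  unfold Bel
  cases X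
  · simp only [Sat]
    constructor
    · rintro ⟨β', hβ', hc, hm⟩
      rw [subst_closed_iff hβ'] at hc
      exact ⟨hc, key _ hβ' hc _ hβ hm⟩
    · rintro ⟨hn, hm⟩
      exact ⟨β, hβ, (subst_closed_iff hβ a).2 hn, hm⟩
  · simp only [Sat]
    constructor
    · intro h
      have := h β hβ
      rwa [subst_closed_iff hβ] at this
    · rintro ⟨hn, hm⟩ β' hβ'
      exact ⟨(subst_closed_iff hβ' a).2 hn, key _ hβ hn _ hβ' hm⟩

/-! ### the restricted structure -/

def Q (w : Interp S) (k : w.U) : Prop := IsNamed w k ∨ ¬ ∃ k, IsNamed w k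

theorem Q_func (w : Interp S) (f : S.Func) (ks : Fin (S.arF f) → w.U) (h : ∀ i, Q w (ks i)) :
    Q w (w.interpF f ks) := by
  by_cases hn : ∃ k, IsNamed w k
  · left
    have : ∀ i, IsNamed w (ks i) := fun i => (h i).resolve_right (not_not.2 hn)
    choose ts hts he using this
    refine ⟨Term.func f ts, hts, ?_⟩
    simp only [Term.evalG, Term.eval]
    congr 1
    funext i
    exact he i
  · exact Or.inr hn

def res (w : Interp S) (T : Set (Formula S)) : Interp S where
  U := {k : w.U // Q w k}
  nonempty := by
    by_cases hn : ∃ k, IsNamed w k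
    · exact ⟨⟨hn.choose, Or.inl hn.choose_spec⟩⟩
    · exact ⟨⟨w.dflt, Or.inr hn⟩⟩
  interpF := fun f ks => ⟨w.interpF f (fun i => (ks i).1), Q_func w f _ (fun i => (ks i).2)⟩
  interpP := fun p ks => w.interpP p (fun i => (ks i).1) ∧
    ∃ ts : Fin (S.arP p) → Term S, (∀ i, (ts i).isGround) ∧ (∀ i, (ts i).evalG w = (ks i).1) ∧
      Formula.atom p ts ∈ T

variable {T : Set (Formula S)}

/-- underlying assignment -/
def und (B : ℕ → (res w T).U) : ℕ → w.U := fun x => (B x).1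

theorem res_eval (B : ℕ → (res w T).U) (t : Term S) :
    (t.eval (res w T) B).1 = t.eval w (und B) := by
  induction t with
  | var y => rfl
  | func f ts ih =>
    simp only [Term.eval, res]
    congr 1
    funext i
    exact ih i

theorem res_evalG (t : Term S) (h : t.isGround) : (t.evalG (res w T)).1 = t.evalG w := by
  rw [Term.evalG, res_eval, ground_evalG _ _ _ h]

theorem res_named (k : (res w T).U) : IsNamed (res w T) k ↔ IsNamed w k.1 := by
  refine exists_congr fun t => and_congr_right fun h => ?_
  rw [← res_evalG (w := w) (T := T) t h]
  exact ⟨fun h => congrArg Subtype.val h, fun h => Subtype.ext h⟩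

theorem res_assoc (B : ℕ → (res w T).U) (β : ℕ → Option (Term S)) :
    Assoc (res w T) B β ↔ Assoc w (und B) β := by
  refine forall_congr' fun x => ?_
  rw [res_named]
  refine and_congr Iff.rfl (forall_congr' fun t => imp_congr_right fun _ =>
    and_congr_right fun h => ?_)
  rw [← res_evalG (w := w) (T := T) t h]
  exact ⟨fun h => congrArg Subtype.val h, fun h => Subtype.ext h⟩

theorem res_box (φ : Formula S) (B : ℕ → (res w T).U) :
    Sat X (res w T) Γ φ.box B ↔ Sat X w Γ φ.box (und B) := by
  cases X <;> simp only [Sat, res_assoc]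

theorem res_bel (a : PAtom S) (B : ℕ → (res w T).U) :
    Bel X (res w T) Γ B a ↔ Bel X w Γ (und B) a := res_box _ _

theorem res_nm {P : Program S} (hf : fullSig P) (hg : goodSig P) (B : ℕ → (res w T).U)
    (a : PAtom S) : Nm w (und B) a := by
  rintro x ⟨i, hi⟩
  obtain ⟨f, _, h0⟩ := hg ⟨a.p, hf.2 _, lt_of_le_of_lt (Nat.zero_le _) i.2⟩
  refine (B x).2.resolve_right (not_not.2 ?_)
  have : Term.isGround (Term.func f (fun i => (Term.var 0 : Term S))) := by
    intro i
    exact absurd i.2 (by omega)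
  exact ⟨_, _, this, rfl⟩

theorem res_tr {P : Program S} (hf : fullSig P) (hg : goodSig P) {Ψ : Set (Formula S)}
    (hT : StableExp X Ψ T) (hu : ModelsT X w T (UNAax P)) (B : ℕ → (res w T).U) (a : PAtom S) :
    Tr (res w T) B a ↔ Tr w (und B) a ∧ Bel X w T (und B) a := by
  have hn := res_nm hf hg B a
  obtain ⟨β, hβ⟩ := assoc_exists w (und B)
  rw [bel_iff hf hT hu hβ]
  have hc := (subst_closed_iff hβ a).2 hn
  have e : Tr (res w T) B a ↔ Tr w (und B) a ∧ 
      ∃ ts : Fin (S.arP a.p) → Term S, (∀ i, (ts i).isGround) ∧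
        (∀ i, (ts i).evalG w = (a.args i).eval w (und B)) ∧ Formula.atom a.p ts ∈ T := by
    simp only [← res_eval]
    unfold Tr
    simp only [← res_eval]
    rfl
  rw [e]
  simp only [PAtom.toFormula, Formula.subst, atom_closed] at hc ⊢
  refine and_congr_right fun _ => ?_
  have h3 : ∀ i, ((a.args i).subst β).evalG w = (a.args i).eval w (und B) := fun i => by
    rw [← ground_evalG w (und B) _ (hc i), eval_subst hβ]
  constructor
  · rintro ⟨ts, h1, h2, hm⟩
    exact ⟨hn, repl hf hT hu h1 hc (fun i => by rw [h2, h3]) hm⟩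
  · rintro ⟨_, hm⟩
    exact ⟨_, hc, h3, hm⟩

/-- head property -/
def HProp (X : Sem) (P : Program S) (w : Interp S) (T : Set (Formula S)) : Prop :=
  ∀ r ∈ P, ∀ B : ℕ → w.U, (∀ a ∈ r.atoms, Nm w B a) →
    (∀ b ∈ r.pos, Tr w B b ∧ Bel X w T B b) → (∀ c ∈ r.neg, ¬ Bel X w T B c) →
    ∃ h ∈ r.head, Tr w B h ∧ Bel X w T B h

theorem res_models {P : Program S} (hw : progWf P) (hf : fullSig P) (hg : goodSig P)
    {Ψ : Set (Formula S)} (hT : StableExp X Ψ T) (hu : ModelsT X w T (UNAax P))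
    (hH : HProp X P w T) :
    ModelsT X (res w T) T (UNAax P) ∧ ModelsT X (res w T) T (PIAax P) ∧
    ModelsT X (res w T) T (ruleEmb embHP P) ∧ ModelsT X (res w T) T (ruleEmb embEB P) ∧
    ModelsT X (res w T) T (ruleEmb embEH P) := by
  have key : ∀ r ∈ P, ∀ B : ℕ → (res w T).U, (∀ b ∈ r.pos, Tr (res w T) B b) →
      (∀ c ∈ r.neg, ¬ Bel X (res w T) T B c) →
      ∃ h ∈ r.head, Tr (res w T) B h ∧ Bel X (res w T) T B h := by
    intro r hr B hp hn
    simp only [res_tr hf hg hT hu, res_bel] at hp hn ⊢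
    obtain ⟨h, hh, h1, h2⟩ := hH r hr (und B) (fun a _ => res_nm hf hg B a) hp hn
    exact ⟨h, hh, ⟨h1, h2⟩, h2⟩
  refine ⟨?_, ?_, ?_, ?_, ?_⟩
  · rintro φ ⟨t, s, ht, hs, hts, rfl⟩ B
    have := hu _ ⟨t, s, ht, hs, hts, rfl⟩ (und B)
    rw [sat_imp, sat_not, sat_not] at this ⊢
    rw [res_box]
    intro h he
    refine this h ?_
    simp only [Sat] at he ⊢
    rw [← res_eval, ← res_eval, he]
  · rintro φ ⟨a, _, _, rfl⟩ B
    rw [sat_imp, sat_tr, res_tr hf hg hT hu]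
    rintro ⟨_, h⟩
    exact (res_box _ _).2 h
  · rintro φ ⟨r, hr, rfl⟩
    rw [models_HP r (hw r hr).1]
    intro B hp hn
    obtain ⟨h, hh, h1, _⟩ := key r hr B hp hn
    exact ⟨h, hh, h1⟩
  · rintro φ ⟨r, hr, rfl⟩
    rw [models_EB r (hw r hr).1]
    intro B hp hn
    obtain ⟨h, hh, h1, _⟩ := key r hr B (fun b hb => (hp b hb).1) hn
    exact ⟨h, hh, h1⟩
  · rintro φ ⟨r, hr, rfl⟩
    rw [models_EH r (hw r hr).1]
    intro B hp hn
    exact key r hr B (fun b hb => (hp b hb).1) hn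

theorem res_atomic (α : Formula S) (ha : α.isAtomic) (hc : α.closed)
    (h : ModelsF X (res w T) Γ α) : ModelsF X w Γ α := by
  intro B
  have h0 := h (fun _ => (res w T).dflt)
  cases α with
  | atom p ts =>
    rw [atom_closed] at hc
    simp only [Sat] at h0 ⊢
    have := h0.1
    simp only [res_eval] at this
    convert this using 2 with i
    exact ground_eval w _ _ _ (hc i)
  | eq t s =>
    rw [eq_closed] at hc
    simp only [Sat] at h0 ⊢
    have := congrArg Subtype.val h0
    rw [res_eval, res_eval] at this
    rw [ground_eval w B _ _ hc.1, this]
    exact ground_eval w _ _ _ hc.2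
  | not _ => exact ha.elim
  | and _ _ => exact ha.elim
  | ex _ _ => exact ha.elim
  | box _ => exact ha.elim

/-! ### head property -/

theorem HProp_pia {P : Program S} (hw : progWf P) (hf : fullSig P) 
    {Ψ : Set (Formula S)} (hT : StableExp X Ψ T) (hu : ModelsT X w T (UNAax P))
    (hp : ModelsT X w T (PIAax P)) (hr : ModelsT X w T (ruleEmb embEB P)) :
    HProp X P w T := by
  intro r hrP B hN hb hc
  obtain ⟨h, hh, ht⟩ := (models_EB r (hw r hrP).1).1 (hr _ ⟨r, hrP, rfl⟩) B hb hc
  refine ⟨h, hh, ht, ?_⟩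
  have hn := hN h (by simp [Rule.atoms, hh])
  obtain ⟨β, hβ⟩ := assoc_exists w B
  rw [bel_iff hf hT hu hβ]
  refine ⟨hn, ?_⟩
  have hcl := (subst_closed_iff hβ h).2 hn
  simp only [PAtom.toFormula, Formula.subst, atom_closed] at hcl
  have := hp _ ⟨⟨h.p, fun i => (h.args i).subst β⟩, hf.2 _, fun i => name_of_ground hf _ (hcl i), rfl⟩ B
  rw [sat_imp, sat_tr] at this
  have h2 := this (by
    unfold Tr at ht ⊢
    simpa only [eval_subst hβ] using ht)
  refine box_ground B ?_ h2
  intro β'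
  simp only [PAtom.toFormula, Formula.subst]
  congr 1
  funext i
  exact ground_subst _ _ (hcl i)

theorem HProp_EH {P : Program S} (hw : progWf P)
    (hr : ModelsT X w T (ruleEmb embEH P)) : HProp X P w T := by
  intro r hrP B _ hb hc
  exact (models_EH r (hw r hrP).1).1 (hr _ ⟨r, hrP, rfl⟩) B hb hc

theorem subst_ext_ground (σ τ : ℕ → Option (Term S)) (t : Term S) (h : (t.subst σ).isGround) :
    t.subst (fun x => (σ x).or (τ x)) = t.subst σ := by
  induction t with
  | var y =>
    simp only [Term.subst] at h ⊢
    cases hy : σ y with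
    | none => rw [hy] at h; exact h.elim
    | some s => rfl
  | func f ts ih =>
    simp only [Term.subst] at h ⊢
    congr 1
    funext i
    exact ih i (h i)

theorem HProp_normal {P : Program S} (hw : progWf P) (hf : fullSig P) (hnorm : progNormal P)
    {Ψ : Set (Formula S)} (hT : StableExp X Ψ T)
    (hΨ : ∀ w, ModelsT X w T Ψ → ModelsT X w T (ruleEmb embEB P) ∧ ModelsT X w T (UNAax P))
    (hu : ModelsT X w T (UNAax P)) (hr : ModelsT X w T (ruleEmb embEB P)) :
    HProp X P w T := by
  intro r hrP B hN hb hc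
  obtain ⟨h, hh, ht⟩ := (models_EB r (hw r hrP).1).1 (hr _ ⟨r, hrP, rfl⟩) B hb hc
  refine ⟨h, hh, ht, ?_⟩
  have huniq : ∀ h' ∈ r.head, h' = h := by
    obtain ⟨a, ha⟩ := List.length_eq_one_iff.1 (hnorm r hrP)
    intro h' hh'
    rw [ha] at hh hh'
    simp only [List.mem_singleton] at hh hh'
    rw [hh, hh']
  obtain ⟨σ, hσ⟩ := assoc_exists w B
  rw [bel_iff hf hT hu hσ]
  refine ⟨hN h (by simp [Rule.atoms, hh]), ?_⟩
  rw [mem_stable hT]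
  intro v hv
  obtain ⟨hvr, hvu⟩ := hΨ v hv
  -- transfer the assignment
  let B' : ℕ → v.U := fun x => match σ x with
    | some t => t.evalG v
    | none => v.dflt
  obtain ⟨τ, hτ⟩ := assoc_exists v B'
  let β : ℕ → Option (Term S) := fun x => (σ x).or (τ x)
  have hβ : Assoc v B' β := by
    intro x
    cases hx : σ x with
    | none =>
      simp only [β, hx, Option.none_or]
      exact hτ x
    | some s =>
      simp only [β, hx, Option.some_or, Option.isSome_some, implies_true, Option.some.injEq,
        true_and, B']
      rintro t rfl
      exact ⟨((hσ x).2 s hx).1, rfl⟩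
  have hsub : ∀ a ∈ r.atoms, a.toFormula.subst β = a.toFormula.subst σ := by
    intro a ha
    have hcl := (subst_closed_iff hσ a).2 (hN a ha)
    simp only [PAtom.toFormula, Formula.subst, atom_closed] at hcl ⊢
    congr 1
    funext i
    exact subst_ext_ground σ τ _ (hcl i)
  have hcl : ∀ a ∈ r.atoms, Nm v B' a := by
    intro a ha
    rw [← subst_closed_iff hβ, hsub a ha, subst_closed_iff hσ]
    exact hN a ha
  have htr : ∀ a ∈ r.atoms, (Sat X v T (a.toFormula.subst σ) B' ↔ Tr v B' a) := by
    intro a ha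
    rw [← hsub a ha]
    simp only [PAtom.toFormula, Formula.subst, Sat, eval_subst hβ, Tr]
  have hbel : ∀ a ∈ r.atoms, (Bel X v T B' a ↔ Bel X w T B a) := by
    intro a ha
    rw [bel_iff hf hT hvu hβ, bel_iff hf hT hu hσ, hsub a ha]
    simp only [hN a ha, hcl a ha]
  obtain ⟨h', hh', ht'⟩ := (models_EB r (hw r hrP).1).1 (hvr _ ⟨r, hrP, rfl⟩) B'
    (by
      intro b hb'
      have hba : b ∈ r.atoms := by simp [Rule.atoms, hb']
      have h1 := (hb b hb').2
      refine ⟨?_, (hbel b hba).2 h1⟩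
      rw [bel_iff hf hT hu hσ] at h1
      exact (htr b hba).1 ((mem_stable hT _).1 h1.2 v hv B'))
    (by
      intro c hc'
      rw [hbel c (by simp [Rule.atoms, hc'])]
      exact hc c hc')
  have hha : h ∈ r.atoms := by simp [Rule.atoms, hh]
  rw [huniq h' hh', ← htr h hha] at ht'
  have hclh := (subst_closed_iff hσ h).2 (hN h hha)
  intro B''
  simp only [PAtom.toFormula, Formula.subst, atom_closed, Sat] at ht' hclh ⊢
  convert ht' using 2 with i
  exact ground_eval v _ _ _ (hclh i)

/-- safe programs: the head property and EB give EH -/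
theorem EH_of_safe {P : Program S} (hw : progWf P) (hf : fullSig P) (hs : progSafe P)
    {Ψ : Set (Formula S)} (hT : StableExp X Ψ T)
    (hu : ModelsT X w T (UNAax P)) (hH : HProp X P w T) :
    ModelsT X w T (ruleEmb embEH P) := by
  rintro φ ⟨r, hr, rfl⟩
  rw [models_EH r (hw r hr).1]
  intro B hb hc
  refine hH r hr B ?_ hb hc
  intro a ha x hx
  obtain ⟨b, hbp, hbx⟩ := hs r hr x ⟨a, ha, hx⟩
  obtain ⟨β, hβ⟩ := assoc_exists w B
  exact ((bel_iff hf hT hu hβ b).1 (hb b hbp).2).1 x hbx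

theorem EB_of_EH {P : Program S} (hw : progWf P) (h : ModelsT X w T (ruleEmb embEH P)) :
    ModelsT X w T (ruleEmb embEB P) := by
  rintro φ ⟨r, hr, rfl⟩
  rw [models_EB r (hw r hr).1]
  intro B hb hc
  obtain ⟨h, hh, h1, _⟩ := (models_EH r (hw r hr).1).1 (h _ ⟨r, hr, rfl⟩) B hb hc
  exact ⟨h, hh, h1⟩

theorem EB_of_HP {P : Program S} (hw : progWf P) (h : ModelsT X w T (ruleEmb embHP P)) :
    ModelsT X w T (ruleEmb embEB P) := by
  rintro φ ⟨r, hr, rfl⟩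
  rw [models_EB r (hw r hr).1]
  intro B hb hc
  exact (models_HP r (hw r hr).1).1 (h _ ⟨r, hr, rfl⟩) B (fun b hb' => (hb b hb').1) hc

theorem models_union (Φ₁ Φ₂ : Set (Formula S)) :
    ModelsT X w T (Φ₁ ∪ Φ₂) ↔ ModelsT X w T Φ₁ ∧ ModelsT X w T Φ₂ := by
  simp only [ModelsT, Set.mem_union, or_imp, forall_and]

theorem ba_union {Φ₁ Φ₂ : Set (Formula S)} (h1 : ∀ φ ∈ Φ₁, φ.boxAtomic)
    (h2 : ∀ φ ∈ Φ₂, φ.boxAtomic) : ∀ φ ∈ Φ₁ ∪ Φ₂, φ.boxAtomic := by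
  rintro φ (h | h)
  exacts [h1 φ h, h2 φ h]

theorem ba_emb {emb : Rule S → Formula S} (h : ∀ r, (emb r).boxAtomic) (P : Program S) :
    ∀ φ ∈ ruleEmb emb P, φ.boxAtomic := by
  rintro φ ⟨r, _, rfl⟩
  exact h r

end A

end Aux

/-- Inclusions between sets of objective consequences: the
inclusions of Figure 1(a) of the paper, spelled out. -/
theorem stmt11 {S : Sig} (X : Sem) :
    (∀ P : Program S, progWf P → progNormal P → fullSig P → goodSig P →
        CnO X (tauEH P) = CnO X (tauEHv P) ∧
        CnO X (tauEB P) ⊆ CnO X (tauEH P) ∧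
        CnO X (tauEB P) ⊆ CnO X (tauHP P) ∧
        CnO X (tauHP P) ⊆ CnO X (tauHPv P) ∧
        CnO X (tauEB P) ⊆ CnO X (tauEBv P) ∧
        (progSafe P → CnO X (tauEH P) ⊆ CnO X (tauEB P))) ∧
    (∀ P : Program S, progWf P → fullSig P → goodSig P →
        CnO X (tauEBv P) ⊆ CnO X (tauHPv P) ∧
        (progSafe P → CnO X (tauEHv P) ⊆ CnO X (tauEBv P))) := by
  open Aux in
  constructor
  · intro P hw hn hf hg
    refine ⟨rfl, ?_, ?_, ?_, ?_, ?_⟩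
    · refine main_incl X _ _ (ba_union (ba_emb ba_EB P) (ba_UNA P)) ?_ ?_ <;>
        intro T hT w hm <;> simp only [tauEB, tauEH, models_union] at hm ⊢
      · exact ⟨EB_of_EH hw hm.1, hm.2⟩
      · have := res_models hw hf hg hT hm.2 (HProp_normal hw hf hn hT (fun v hv => by
          simp only [tauEH, models_union] at hv
          exact ⟨EB_of_EH hw hv.1, hv.2⟩) hm.2 hm.1)
        exact ⟨res w T, ⟨this.2.2.2.2, this.1⟩, res_atomic⟩
    · refine main_incl X _ _ (ba_union (ba_emb ba_EB P) (ba_UNA P)) ?_ ?_ <;>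
        intro T hT w hm <;> simp only [tauEB, tauHP, models_union] at hm ⊢
      · exact ⟨EB_of_HP hw hm.1, hm.2⟩
      · have := res_models hw hf hg hT hm.2 (HProp_normal hw hf hn hT (fun v hv => by
          simp only [tauHP, models_union] at hv
          exact ⟨EB_of_HP hw hv.1, hv.2⟩) hm.2 hm.1)
        exact ⟨res w T, ⟨this.2.2.1, this.1⟩, res_atomic⟩
    · refine main_incl X _ _ (ba_union (ba_emb ba_HP P) (ba_UNA P)) ?_ ?_ <;>
        intro T hT w hm <;> simp only [tauHP, tauHPv, models_union] at hm ⊢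
      · exact ⟨hm.1.1, hm.2⟩
      · have := res_models hw hf hg hT hm.2 (HProp_normal hw hf hn hT (fun v hv => by
          simp only [tauHPv, models_union] at hv
          exact ⟨EB_of_HP hw hv.1.1, hv.2⟩) hm.2 (EB_of_HP hw hm.1))
        exact ⟨res w T, ⟨⟨this.2.2.1, this.2.1⟩, this.1⟩, res_atomic⟩
    · refine main_incl X _ _ (ba_union (ba_emb ba_EB P) (ba_UNA P)) ?_ ?_ <;>
        intro T hT w hm <;> simp only [tauEB, tauEBv, models_union] at hm ⊢
      · exact ⟨hm.1.1, hm.2⟩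
      · have := res_models hw hf hg hT hm.2 (HProp_normal hw hf hn hT (fun v hv => by
          simp only [tauEBv, models_union] at hv
          exact ⟨hv.1.1, hv.2⟩) hm.2 hm.1)
        exact ⟨res w T, ⟨⟨this.2.2.2.1, this.2.1⟩, this.1⟩, res_atomic⟩
    · intro hs
      refine main_incl X _ _ (ba_union (ba_emb ba_EH P) (ba_UNA P)) ?_ ?_ <;>
        intro T hT w hm <;> simp only [tauEB, tauEH, models_union] at hm ⊢
      · exact ⟨EH_of_safe hw hf hs hT hm.2 (HProp_normal hw hf hn hT (fun v hv => by
          simp only [tauEB, models_union] at hv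
          exact hv) hm.2 hm.1), hm.2⟩
      · exact ⟨w, ⟨EB_of_EH hw hm.1, hm.2⟩, fun _ _ _ h => h⟩
  · intro P hw hf hg
    refine ⟨?_, ?_⟩
    · refine main_incl X _ _
        (ba_union (ba_union (ba_emb ba_EB P) (ba_PIA P)) (ba_UNA P)) ?_ ?_ <;>
        intro T hT w hm <;> simp only [tauEBv, tauHPv, models_union] at hm ⊢
      · exact ⟨⟨EB_of_HP hw hm.1.1, hm.1.2⟩, hm.2⟩
      · have := res_models hw hf hg hT hm.2 (HProp_pia hw hf hT hm.2 hm.1.2 hm.1.1)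
        exact ⟨res w T, ⟨⟨this.2.2.1, this.2.1⟩, this.1⟩, res_atomic⟩
    · intro hs
      refine main_incl X _ _ (ba_union (ba_emb ba_EH P) (ba_UNA P)) ?_ ?_ <;>
        intro T hT w hm <;> simp only [tauEBv, tauEHv, models_union] at hm ⊢
      · exact ⟨EH_of_safe hw hf hs hT hm.2 (HProp_pia hw hf hT hm.2 hm.1.2 hm.1.1), hm.2⟩
      · have := res_models hw hf hg hT hm.2 (HProp_EH hw hm.1)
        exact ⟨res w T, ⟨⟨this.2.2.2.1, this.2.1⟩, this.1⟩, res_atomic⟩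
end

section
/- Let X ∈ {E,A}. The following inclusions fail: there is a disjunctive logic program P with Cnˣ_o(τ^∨_EH(P)) ⊄ Cnˣ_o(τ^∨_HP(P)); there is a safe normal logic program P with Cnˣ_o(τ^∨_EB(P)) ⊄ Cnˣ_o(τ_HP(P)); and there is a safe normal logic program P with Cnˣ_o(τ_HP(P)) ⊄ Cnˣ_o(τ^∨_EB(P)). -/
set_option autoImplicit false

def Formula.depth {S : Sig} : Formula S → ℕ
  | .atom _ _ => 0
  | .eq _ _ => 0
  | .not φ => φ.depth
  | .and φ ψ => max φ.depth ψ.depth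
  | .ex _ φ => φ.depth
  | .box φ => φ.depth + 1

theorem Formula.depth_subst {S : Sig} (φ : Formula S) :
    ∀ β, (φ.subst β).depth = φ.depth := by
  induction φ with
  | atom p ts => intro β; rfl
  | eq t₁ t₂ => intro β; rfl
  | not φ ih => intro β; simp [Formula.subst, Formula.depth, ih]
  | and φ ψ ih1 ih2 => intro β; simp [Formula.subst, Formula.depth, ih1, ih2]
  | ex y φ ih => intro β; simp [Formula.subst, Formula.depth, ih]
  | box φ ih => intro β; simp [Formula.subst, Formula.depth, ih]

theorem sat_congr {S : Sig} (X : Sem) (w : Interp S) (Γ Δ : Set (Formula S)) (φ : Formula S) :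
    (∀ ψ : Formula S, ψ.depth < φ.depth → (ψ ∈ Γ ↔ ψ ∈ Δ)) →
      ∀ B, Sat X w Γ φ B ↔ Sat X w Δ φ B := by
  induction φ with
  | atom p ts => intro _ B; simp [Sat]
  | eq t₁ t₂ => intro _ B; simp [Sat]
  | not φ ih => intro h B; simp only [Sat]; rw [ih h B]
  | and φ ψ ih1 ih2 =>
    intro h B
    simp only [Sat]
    rw [ih1 (fun χ hχ => h χ (by simp [Formula.depth, hχ])) B,
      ih2 (fun χ hχ => h χ (by simp [Formula.depth, hχ])) B]
  | ex y φ ih =>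
    intro h B
    simp only [Sat]
    exact exists_congr (fun u => ih h _)
  | box φ ih =>
    intro h B
    have hh : ∀ β, (φ.subst β ∈ Γ ↔ φ.subst β ∈ Δ) := fun β =>
      h _ (by rw [Formula.depth_subst]; simp [Formula.depth])
    cases X <;> simp only [Sat, hh]

def ThOp {S : Sig} (X : Sem) (W : Interp S → Prop) (T : Set (Formula S)) : Set (Formula S) :=
  {φ | ∀ w, W w → ModelsF X w T φ}

theorem thOp_congr {S : Sig} (X : Sem) (W : Interp S → Prop) (Γ Δ : Set (Formula S))
    (φ : Formula S) (h : ∀ ψ : Formula S, ψ.depth < φ.depth → (ψ ∈ Γ ↔ ψ ∈ Δ)) :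
    φ ∈ ThOp X W Γ ↔ φ ∈ ThOp X W Δ := by
  simp only [ThOp, Set.mem_setOf_eq, ModelsF, sat_congr X _ Γ Δ φ h]

def thIter {S : Sig} (X : Sem) (W : Interp S → Prop) : ℕ → Set (Formula S)
  | 0 => ∅
  | n + 1 => ThOp X W (thIter X W n)

theorem thIter_agree {S : Sig} (X : Sem) (W : Interp S → Prop) (n : ℕ) :
    ∀ m, n ≤ m → ∀ φ : Formula S, φ.depth < n → (φ ∈ thIter X W n ↔ φ ∈ thIter X W m) := by
  induction n with
  | zero => intro m _ φ h; omega
  | succ n ih =>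
    intro m hm φ h
    obtain ⟨m, rfl⟩ : ∃ k, m = k + 1 := ⟨m - 1, by omega⟩
    exact thOp_congr X W _ _ φ (fun ψ hψ => ih m (by omega) ψ (by omega))

theorem exists_th {S : Sig} (X : Sem) (W : Interp S → Prop) :
    ∃ T : Set (Formula S), T = {φ | ∀ w, W w → ModelsF X w T φ} := by
  refine ⟨{φ | φ ∈ thIter X W (φ.depth + 1)}, ?_⟩
  ext φ
  refine thOp_congr X W _ _ φ (fun ψ hψ => ?_)
  exact (thIter_agree X W (ψ.depth + 1) φ.depth (by omega) ψ (by omega)).symm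

theorem exists_stable {S : Sig} (X : Sem) (W : Interp S → Prop) (Φ : Set (Formula S))
    (h : ∀ T : Set (Formula S), T = {φ | ∀ w, W w → ModelsF X w T φ} →
      ∀ w, ModelsT X w T Φ ↔ W w) :
    ∃ T, StableExp X Φ T ∧ T = {φ | ∀ w, W w → ModelsF X w T φ} := by
  obtain ⟨T, hT⟩ := exists_th X W
  refine ⟨T, ?_, hT⟩
  unfold StableExp Entails
  simp only [h T hT]
  exact hT

theorem assoc_exists {S : Sig} (w : Interp S) (B : ℕ → w.U) : ∃ β, Assoc w B β := by
  classical
  refine ⟨fun x => if h : IsNamed w (B x) then some h.choose else none, fun x => ⟨?_, ?_⟩⟩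
  · intro h; simp [h]
  · intro t ht
    by_cases h : IsNamed w (B x)
    · simp only [h, dif_pos, Option.some.injEq] at ht
      subst ht
      exact h.choose_spec
    · simp [h] at ht

theorem box_elim {S : Sig} {X : Sem} {w : Interp S} {Γ : Set (Formula S)} {φ : Formula S}
    {B : ℕ → w.U} (h : Sat X w Γ (.box φ) B) :
    ∃ β, Assoc w B β ∧ (φ.subst β).closed ∧ φ.subst β ∈ Γ := by
  cases X with
  | any => exact h
  | all =>
    obtain ⟨β, hβ⟩ := assoc_exists w B
    exact ⟨β, hβ, h β hβ⟩

theorem box_intro {S : Sig} {X : Sem} {w : Interp S} {Γ : Set (Formula S)} {φ : Formula S}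
    {B : ℕ → w.U} (h : ∀ β, Assoc w B β → (φ.subst β).closed ∧ φ.subst β ∈ Γ) :
    Sat X w Γ (.box φ) B := by
  cases X with
  | all => exact h
  | any =>
    obtain ⟨β, hβ⟩ := assoc_exists w B
    exact ⟨β, hβ, h β hβ⟩

/-! Signature with a single constant and unary predicates indexed by `A`. -/

abbrev SU (A : Type) : Sig := ⟨Unit, A, fun _ => 0, fun _ => 1⟩

abbrev cA (A : Type) : Term (SU A) := .func () Fin.elim0

theorem ground_cA {A : Type} (t : Term (SU A)) (h : t.isGround) : t = cA A := by
  cases t with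
  | var x => exact h.elim
  | func f ts =>
    cases f
    congr
    funext i
    exact i.elim0

theorem name_cA {A : Type} (F : Set Unit) (t : Term (SU A)) (h : t.isNameOf F) : t = cA A := by
  cases t with
  | var x => exact h.elim
  | func f ts =>
    cases f
    congr
    funext i
    exact i.elim0

theorem evalG_cA {A : Type} (w : Interp (SU A)) (B : ℕ → w.U) :
    Term.evalG w (cA A) = (cA A).eval w B := by
  unfold Term.evalG cA
  simp only [Term.eval]
  congr
  funext i
  exact i.elim0

abbrev at1 {A : Type} (p : A) (t : Term (SU A)) : PAtom (SU A) := ⟨p, fun _ => t⟩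

theorem closed_at {A : Type} (p : A) : (at1 p (cA A)).toFormula.closed := by
  intro x h
  obtain ⟨i, j, _⟩ := h
  exact j.elim0

theorem subst_at {A : Type} (p : A) (β : ℕ → Option (Term (SU A))) :
    (at1 p (cA A)).toFormula.subst β = (at1 p (cA A)).toFormula := by
  simp only [PAtom.toFormula, Formula.subst, Term.subst]
  congr
  funext _
  congr
  funext i
  exact i.elim0

/-- `𝖫 p(x)` forces `x` to denote the constant. -/
theorem box_var {A : Type} {X : Sem} {w : Interp (SU A)} {Γ : Set (Formula (SU A))} {p : A}
    {x : ℕ} {B : ℕ → w.U} (h : Sat X w Γ (.box (at1 p (.var x)).toFormula) B) :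
    B x = Term.evalG w (cA A) := by
  obtain ⟨β, hβ, hc, -⟩ := box_elim h
  cases hx : β x with
  | none =>
    exfalso
    refine hc x ⟨0, ?_⟩
    simp [Term.subst, hx, Term.hasVar]
  | some t =>
    obtain ⟨hg, he⟩ := (hβ x).2 t hx
    rw [← he, ground_cA t hg]

theorem var_box {A : Type} {X : Sem} {w : Interp (SU A)} {Γ : Set (Formula (SU A))} {p : A}
    {x : ℕ} {B : ℕ → w.U} (hm : (at1 p (cA A)).toFormula ∈ Γ)
    (h : B x = Term.evalG w (cA A)) :
    Sat X w Γ (.box (at1 p (.var x)).toFormula) B := by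
  apply box_intro
  intro β hβ
  have hs := (hβ x).1 ⟨cA A, fun i => i.elim0, h.symm⟩
  obtain ⟨t, ht⟩ := Option.isSome_iff_exists.1 hs
  have : (at1 p (.var x)).toFormula.subst β = (at1 p (cA A)).toFormula := by
    simp [PAtom.toFormula, Formula.subst, Term.subst, ht, ground_cA t ((hβ x).2 t ht).1]
  rw [this]
  exact ⟨closed_at p, hm⟩

theorem box_const {A : Type} {X : Sem} {w : Interp (SU A)} {Γ : Set (Formula (SU A))} {p : A}
    {B : ℕ → w.U} (hm : (at1 p (cA A)).toFormula ∈ Γ) :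
    Sat X w Γ (.box (at1 p (cA A)).toFormula) B := by
  apply box_intro
  intro β _
  rw [subst_at]
  exact ⟨closed_at p, hm⟩

theorem sat_imp {S : Sig} {X : Sem} {w : Interp S} {Γ : Set (Formula S)} {φ ψ : Formula S}
    {B : ℕ → w.U} : Sat X w Γ (.imp φ ψ) B ↔ (Sat X w Γ φ B → Sat X w Γ ψ B) := by
  simp [Formula.imp, Sat]

theorem sat_all {S : Sig} {X : Sem} {w : Interp S} {Γ : Set (Formula S)} {φ : Formula S}
    {x : ℕ} {B : ℕ → w.U} :
    Sat X w Γ (.all x φ) B ↔ ∀ u, Sat X w Γ φ (Function.update B x u) := by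
  simp [Formula.all, Sat]

theorem sat_const {A : Type} {X : Sem} {w : Interp (SU A)} {Γ : Set (Formula (SU A))} {p : A}
    {B : ℕ → w.U} : Sat X w Γ (at1 p (cA A)).toFormula B ↔
      w.interpP p (fun _ => Term.evalG w (cA A)) := by
  rw [evalG_cA w B]; rfl

theorem sat_var {A : Type} {X : Sem} {w : Interp (SU A)} {Γ : Set (Formula (SU A))} {p : A}
    {x : ℕ} {B : ℕ → w.U} : Sat X w Γ (at1 p (.var x)).toFormula B ↔
      w.interpP p (fun _ => B x) := Iff.rfl

theorem una_vac {A : Type} (P : Program (SU A)) : UNAax P = ∅ := by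
  ext φ
  simp only [UNAax, Set.mem_setOf_eq, Set.mem_empty_iff_false, iff_false]
  rintro ⟨t₁, t₂, h1, h2, h, -⟩
  exact h ((name_cA _ _ h1).trans (name_cA _ _ h2).symm)

theorem pia_sat {A : Type} {X : Sem} {w : Interp (SU A)} {Γ : Set (Formula (SU A))}
    {P : Program (SU A)} (h : ∀ p, (at1 p (cA A)).toFormula ∈ Γ) :
    ModelsT X w Γ (PIAax P) := by
  rintro φ ⟨⟨p, args⟩, -, hn, rfl⟩ B
  have : args = fun _ => cA A := funext fun i => name_cA _ _ (hn i)
  subst this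
  exact sat_imp.2 fun _ => box_const (h p)

/-! ### Part 1 -/

abbrev fact1 {A : Type} (p : A) : Rule (SU A) := ⟨[at1 p (cA A)], [], [], []⟩

abbrev P1 : Program (SU Unit) := {⟨[at1 () (.var 0)], [], [], [0]⟩, fact1 ()}

theorem part1 (X : Sem) : progWf P1 ∧ fullSig P1 ∧ goodSig P1 ∧
    ¬ CnO X (tauEHv P1) ⊆ CnO X (tauHPv P1) := by
  have hf : () ∈ progFuncs P1 :=
    ⟨fact1 (), by simp, at1 () (cA Unit), by simp [Rule.atoms],
      by simp [PAtom.funcs, Term.funcs]⟩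
  refine ⟨?_, ⟨fun _ => hf, ?_⟩, fun _ => ⟨(), hf, rfl⟩, ?_⟩
  · rintro r (rfl | rfl)
    · refine ⟨by simp, ?_⟩
      rintro x ⟨a, ha, i, hi⟩
      simp [Rule.atoms] at ha
      subst ha
      simp [Term.hasVar] at hi
      simp [hi]
    · refine ⟨by simp, ?_⟩
      rintro x ⟨a, ha, i, hi⟩
      simp [Rule.atoms] at ha
      subst ha
      obtain ⟨j, _⟩ := hi
      exact j.elim0
  · intro q
    exact ⟨fact1 (), by simp, at1 () (cA Unit), by simp [Rule.atoms], rfl⟩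
  · intro hsub
    have h1 : Formula.eq (.var 0) (cA Unit) ∈ CnO X (tauEHv P1) := by
      refine ⟨?_, trivial⟩
      intro T hT
      rw [hT]
      intro w hw B
      have := hw _ (Or.inl ⟨_, Or.inl rfl, rfl⟩) B
      have := sat_all.1 this (B 0)
      have := box_var this.2
      rw [Function.update_self] at this
      rw [evalG_cA w B] at this
      exact this
    obtain ⟨T, hS, hT⟩ := exists_stable X (fun w : Interp (SU Unit) => ∀ u, w.interpP () u)
      (tauHPv P1) (by
        intro T hT w
        constructor
        · intro hw u
          have := hw _ (Or.inl (Or.inl ⟨_, Or.inl rfl, rfl⟩)) (fun _ => w.dflt)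
          have := sat_all.1 this (u 0)
          have := sat_var.1 this
          rw [Function.update_self] at this
          convert this using 2 with i
          rw [Subsingleton.elim 0]
        · intro hw
          have hp : ∀ p, (at1 p (cA Unit)).toFormula ∈ T := by
            intro p; rw [hT]; intro w' hw' B; exact hw' _
          rintro φ ((⟨r, (rfl | rfl), rfl⟩ | hφ) | hφ)
          · intro B
            exact sat_all.2 fun u => hw _
          · intro B
            exact hw _
          · exact pia_sat hp φ hφ
          · rw [una_vac] at hφ; exact hφ.elim)
    have := (hsub h1).1 T hS
    rw [hT] at this
    have := this ⟨Bool, ⟨true⟩, fun _ _ => true, fun _ _ => True⟩ (fun _ => trivial)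
      (fun _ => false)
    simp [Sat, Term.eval] at this

/-! ### Part 2 -/

abbrev S2 : Sig := ⟨Empty, Unit, fun _ => 0, fun _ => 0⟩

abbrev a2 : PAtom S2 := ⟨(), Fin.elim0⟩

abbrev P2 : Program S2 := {⟨[a2], [a2], [], []⟩}

theorem una2 : UNAax P2 = ∅ := by
  ext φ
  simp only [UNAax, Set.mem_setOf_eq, Set.mem_empty_iff_false, iff_false]
  rintro ⟨t₁, t₂, h1, h2, h, -⟩
  cases t₁ with
  | var x => exact h1
  | func f _ => exact f.elim

theorem a2_eq (a : PAtom S2) : a = a2 := by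
  obtain ⟨p, args⟩ := a
  congr
  funext i
  exact i.elim0

theorem a2_subst (β : ℕ → Option (Term S2)) : a2.toFormula.subst β = a2.toFormula := by
  simp only [PAtom.toFormula, Formula.subst]
  congr
  funext i
  exact i.elim0

theorem part2 (X : Sem) : progWf P2 ∧ progNormal P2 ∧ progSafe P2 ∧ fullSig P2 ∧ goodSig P2 ∧
    ¬ CnO X (tauEBv P2) ⊆ CnO X (tauHP P2) := by
  refine ⟨?_, ?_, ?_, ⟨fun f => f.elim, ?_⟩, ?_, ?_⟩
  · rintro r rfl
    refine ⟨by simp, ?_⟩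
    rintro x ⟨a, ha, i, hi⟩
    exact i.elim0
  · rintro r rfl; rfl
  · rintro r rfl
    rintro x ⟨a, ha, i, hi⟩
    exact i.elim0
  · intro q
    exact ⟨_, rfl, a2, by simp [Rule.atoms], rfl⟩
  · rintro ⟨q, _, hq⟩
    exact absurd hq (lt_irrefl 0)
  · intro hsub
    have h1 : Formula.not a2.toFormula ∈ CnO X (tauEBv P2) := by
      refine ⟨?_, trivial⟩
      intro T hT
      have hno : a2.toFormula ∉ T := by
        intro hm
        have hm' := hm
        rw [hT] at hm'
        refine hm' ⟨Unit, ⟨()⟩, fun _ _ => (), fun _ _ => False⟩ ?_ (fun _ => ())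
        rintro φ ((⟨r, rfl, rfl⟩ | ⟨a, -, -, rfl⟩) | hφ)
        · intro B
          exact sat_imp.2 fun h => h.1
        · intro B
          exact sat_imp.2 fun h => h.elim
        · rw [una2] at hφ; exact hφ.elim
      rw [hT]
      intro w hw B h
      have := hw _ (Or.inl (Or.inr ⟨a2, ⟨_, rfl, a2, by simp [Rule.atoms], rfl⟩,
        fun i => i.elim0, rfl⟩)) B
      obtain ⟨β, -, -, hm⟩ := box_elim (sat_imp.1 this h)
      rw [a2_subst] at hm
      exact hno hm
    obtain ⟨T, hS, hT⟩ := exists_stable X (fun w : Interp S2 => True)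
      (tauHP P2) (by
        intro T hT w
        refine ⟨fun _ => trivial, fun _ => ?_⟩
        rintro φ (⟨r, rfl, rfl⟩ | hφ)
        · intro B
          exact sat_imp.2 fun h => h
        · rw [una2] at hφ; exact hφ.elim)
    have := (hsub h1).1 T hS
    rw [hT] at this
    exact this ⟨Unit, ⟨()⟩, fun _ _ => (), fun _ _ => True⟩ trivial (fun _ => ()) trivial

/-! ### Part 3 -/

abbrev r3 : Rule (SU Bool) := ⟨[at1 false (.var 0)], [at1 true (.var 0)], [], [0]⟩

abbrev P3 : Program (SU Bool) := {r3, fact1 true}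

theorem part3 (X : Sem) : progWf P3 ∧ progNormal P3 ∧ progSafe P3 ∧ fullSig P3 ∧ goodSig P3 ∧
    ¬ CnO X (tauHP P3) ⊆ CnO X (tauEBv P3) := by
  have hf : () ∈ progFuncs P3 :=
    ⟨fact1 true, by simp, at1 true (cA Bool), by simp [Rule.atoms],
      by simp [PAtom.funcs, Term.funcs]⟩
  have hv3 : ∀ x, r3.hasVar x → x = 0 := by
    rintro x ⟨a, ha, i, hi⟩
    simp [Rule.atoms] at ha
    rcases ha with rfl | rfl <;> simp [Term.hasVar] at hi <;> exact hi.symm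
  have hvf : ∀ x, ¬ (fact1 true).hasVar x := by
    rintro x ⟨a, ha, i, hi⟩
    simp [Rule.atoms] at ha
    subst ha
    obtain ⟨j, _⟩ := hi
    exact j.elim0
  refine ⟨?_, ?_, ?_, ⟨fun _ => hf, ?_⟩, fun _ => ⟨(), hf, rfl⟩, ?_⟩
  · rintro r (rfl | rfl)
    · exact ⟨by simp, fun x hx => by simp [hv3 x hx]⟩
    · exact ⟨by simp, fun x hx => (hvf x hx).elim⟩
  · rintro r (rfl | rfl) <;> rfl
  · rintro r (rfl | rfl)
    · intro x hx
      exact ⟨at1 true (.var 0), by simp, 0, (hv3 x hx).symm⟩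
    · exact fun x hx => (hvf x hx).elim
  · intro q
    cases q with
    | true => exact ⟨fact1 true, by simp, at1 true (cA Bool), by simp [Rule.atoms], rfl⟩
    | false => exact ⟨r3, by simp, at1 false (.var 0), by simp [Rule.atoms], rfl⟩
  · intro hsub
    have h1 : embHP r3 ∈ CnO X (tauHP P3) := by
      refine ⟨?_, ⟨trivial, trivial⟩⟩
      intro T hT
      rw [hT]
      intro w hw
      exact hw _ (Or.inl ⟨_, Or.inl rfl, rfl⟩)
    obtain ⟨T, hS, hT⟩ := exists_stable X
      (fun w : Interp (SU Bool) => ∀ p, w.interpP p (fun _ => Term.evalG w (cA Bool)))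
      (tauEBv P3) (by
        intro T hT w
        have hp : ∀ p, (at1 p (cA Bool)).toFormula ∈ T := by
          intro p; rw [hT]; intro w' hw' B; exact sat_const.2 (hw' p)
        constructor
        · intro hw
          have ht : w.interpP true (fun _ => Term.evalG w (cA Bool)) :=
            sat_const.1 (hw _ (Or.inl (Or.inl ⟨_, Or.inr rfl, rfl⟩)) (fun _ => w.dflt))
          have := hw _ (Or.inl (Or.inl ⟨_, Or.inl rfl, rfl⟩)) (fun _ => w.dflt)
          have := sat_imp.1 (sat_all.1 this (Term.evalG w (cA Bool)))
          have := this ⟨sat_var.2 (by rw [Function.update_self]; exact ht),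
            var_box (hp true) (by rw [Function.update_self])⟩
          have := sat_var.1 this
          rw [Function.update_self] at this
          intro p
          cases p
          · exact this
          · exact ht
        · intro hw
          rintro φ ((⟨r, (rfl | rfl), rfl⟩ | hφ) | hφ)
          · intro B
            refine sat_all.2 fun u => sat_imp.2 fun h => ?_
            refine sat_var.2 ?_
            rw [box_var h.2]
            exact hw false
          · intro B
            exact sat_const.2 (hw true)
          · exact pia_sat hp φ hφ
          · rw [una_vac] at hφ; exact hφ.elim)
    have := (hsub h1).1 T hS
    rw [hT] at this
    have := this ⟨Bool, ⟨true⟩, fun _ _ => true, fun p u => p = true ∨ u 0 = true⟩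
      (fun _ => Or.inr rfl) (fun _ => false)
    have := sat_imp.1 (sat_all.1 this false) (Or.inl rfl)
    simp [Sat, Term.eval, disjOf, orAll, PAtom.toFormula] at this

/-- Failing inclusions: there are programs witnessing
`Cnˣ_o(τ^∨_EH(P)) ⊄ Cnˣ_o(τ^∨_HP(P))` (disjunctive `P`),
`Cnˣ_o(τ^∨_EB(P)) ⊄ Cnˣ_o(τ_HP(P))` (safe normal `P`), and
`Cnˣ_o(τ_HP(P)) ⊄ Cnˣ_o(τ^∨_EB(P))` (safe normal `P`). -/
theorem stmt12 (X : Sem) :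
    (∃ (S : Sig) (P : Program S), progWf P ∧ fullSig P ∧ goodSig P ∧
        ¬ CnO X (tauEHv P) ⊆ CnO X (tauHPv P)) ∧
    (∃ (S : Sig) (P : Program S), progWf P ∧ progNormal P ∧ progSafe P ∧
        fullSig P ∧ goodSig P ∧
        ¬ CnO X (tauEBv P) ⊆ CnO X (tauHP P)) ∧
    (∃ (S : Sig) (P : Program S), progWf P ∧ progNormal P ∧ progSafe P ∧
        fullSig P ∧ goodSig P ∧
        ¬ CnO X (tauHP P) ⊆ CnO X (tauEBv P)) := by
  exact ⟨⟨_, _, part1 X⟩, ⟨_, _, part2 X⟩, ⟨_, _, part3 X⟩⟩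
end
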